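/- arXiv:1901.01913 — 5 statements merged into one kernel-verified Lean document; each statement's English description precedes it below -/
import Mathlib

section
/- Let a0 ∈ ℝ^k with ‖a0‖₂ = 1 and let 0 < λ < 1. Let 𝓘 = { supp(S_λ((Č_{a0})* ι a)) : a ∈ ℝ^k, ‖a‖₂ = 1 }. For each nonempty I = {i₁ < … < i_{|I|}} ∈ 𝓘, let W_I be the k × |I| matrix whose j-th column is ι* s_{−i_j}[ι a0] / ‖ι* s_{−i_j}[ι a0]‖₂. Suppose that for every nonempty I ∈ 𝓘 one has ‖(W_I)* W_I − Id‖_op < λ²/6. Then every local minimizer ā of φ̂ restricted to the unit sphere {a ∈ ℝ^k : ‖a‖₂ = 1} satisfies one of the following: (i) S_λ((Č_{a0})* ι ā) = 0, in which case ā is a global maximizer of φ̂ over the unit sphere; or (ii) there exist ε ∈ {−1, +1} and τ ∈ {0, …, m−1} such that ā = ε · ι* s_{−τ}[ι a0] / ‖ι* s_{−τ}[ι a0]‖₂, and the unique minimizer of the inner problem defining φ̂(ā) is x*(ā) = ε · S_λ(‖ι* s_{−τ}[ι a0]‖₂) · e_τ, where e_τ is the τ-th standard basis vector of ℝ^m.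 -/
open scoped BigOperators Matrix

attribute [local instance 10] Classical.propDecidable

noncomputable section

/-- The index `t mod m` as an element of `Fin m`. -/
def idx (m : ℕ) [NeZero m] (t : ℤ) : Fin m :=
  ⟨(t % (m : ℤ)).toNat, by
    have hm : 0 < m := Nat.pos_of_ne_zero (NeZero.ne m)
    have hm' : (0 : ℤ) < (m : ℤ) := by exact_mod_cast hm
    have h1 : 0 ≤ t % (m : ℤ) := Int.emod_nonneg t (ne_of_gt hm')
    have h2 : t % (m : ℤ) < (m : ℤ) := Int.emod_lt_of_pos t hm'
    omega⟩

/-- Cyclic shift: `(cshift τ v) i = v ((i - τ) mod m)`. -/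
def cshift {m : ℕ} [NeZero m] (τ : ℤ) (v : Fin m → ℝ) : Fin m → ℝ :=
  fun i => v (idx m ((i : ℤ) - τ))

/-- Zero padding `ι : ℝ^k → ℝ^m`. -/
def pad (k m : ℕ) (a : Fin k → ℝ) : Fin m → ℝ :=
  fun i => if h : (i : ℕ) < k then a ⟨i, h⟩ else 0

/-- Restriction to the first `k` coordinates, `ι* : ℝ^m → ℝ^k`. -/
def unpad {k m : ℕ} (h : k ≤ m) (v : Fin m → ℝ) : Fin k → ℝ :=
  fun j => v (Fin.castLE h j)

/-- Circulant matrix `C_w` whose `j`-th column is `s_j[w]`. -/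
def circ {m : ℕ} [NeZero m] (w : Fin m → ℝ) : Matrix (Fin m) (Fin m) ℝ :=
  Matrix.of fun i j => cshift (j : ℤ) w i

/-- Reversed circulant matrix `Č_{a0}` whose `j`-th column is `s_{-j}[ι a0]`. -/
def rcirc (k m : ℕ) [NeZero m] (a0 : Fin k → ℝ) : Matrix (Fin m) (Fin m) ℝ :=
  Matrix.of fun i j => cshift (-(j : ℤ)) (pad k m a0) i

/-- Circular convolution `w ⊛ x = C_w x`. -/
def conv {m : ℕ} [NeZero m] (w x : Fin m → ℝ) : Fin m → ℝ := (circ w).mulVec x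

def dotp {α : Type*} [Fintype α] (u v : α → ℝ) : ℝ := ∑ i, u i * v i

def l2sq {α : Type*} [Fintype α] (v : α → ℝ) : ℝ := ∑ i, v i ^ 2

def l2norm {α : Type*} [Fintype α] (v : α → ℝ) : ℝ := Real.sqrt (l2sq v)

def l1norm {α : Type*} [Fintype α] (v : α → ℝ) : ℝ := ∑ i, |v i|

/-- Scalar soft-thresholding. -/
def soft (lam t : ℝ) : ℝ := Real.sign t * max (|t| - lam) 0

/-- Entrywise soft-thresholding `S_λ`. -/
def softvec {m : ℕ} (lam : ℝ) (u : Fin m → ℝ) : Fin m → ℝ := fun i => soft lam (u i)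

/-- The shift truncation `ι* s_{-τ}[ι a0] ∈ ℝ^k`. -/
def shiftTrunc {k m : ℕ} [NeZero m] (h : k ≤ m) (a0 : Fin k → ℝ) (τ : Fin m) : Fin k → ℝ :=
  unpad h (cshift (-(τ : ℤ)) (pad k m a0))

/-- The inner objective of the simplified marginal problem. -/
def phiHatInner (k m : ℕ) [NeZero m] (lam : ℝ) (a0 a : Fin k → ℝ) (x : Fin m → ℝ) : ℝ :=
  l2sq (pad k m a0) / 2 + l2sq x / 2 - dotp (conv (pad k m a) x) (pad k m a0) + lam * l1norm x

/-- The simplified marginal objective `φ̂`. -/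
def phiHat (k m : ℕ) [NeZero m] (lam : ℝ) (a0 a : Fin k → ℝ) : ℝ :=
  sInf (Set.range (phiHatInner k m lam a0 a))

/-- Zero-padding `ι` as an `m × k` matrix. -/
def padM (k m : ℕ) : Matrix (Fin m) (Fin k) ℝ :=
  Matrix.of fun i j => if (i : ℕ) = (j : ℕ) then 1 else 0

/-- The diagonal 0/1 projection matrix `P_I`. -/
def projM {m : ℕ} (I : Set (Fin m)) : Matrix (Fin m) (Fin m) ℝ :=
  Matrix.of fun i j => if i = j ∧ i ∈ I then 1 else 0

/-- The `ℓ² → ℓ²` operator norm of a matrix. -/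
def opNorm {α β : Type*} [Fintype α] [Fintype β] (A : Matrix α β ℝ) : ℝ :=
  sSup {c | ∃ v : β → ℝ, l2norm v = 1 ∧ c = l2norm (A.mulVec v)}

/-- The `ℓ² → ℓ∞` operator norm of a matrix. -/
def l2linfNorm {α β : Type*} [Fintype α] [Fintype β] (A : Matrix α β ℝ) : ℝ :=
  sSup {c | ∃ v : β → ℝ, l2norm v = 1 ∧ c = sSup {d | ∃ i, d = |A.mulVec v i|}}

/-- The smallest eigenvalue of a symmetric matrix, via the Rayleigh quotient. -/
def lamMin {n : ℕ} (A : Matrix (Fin n) (Fin n) ℝ) : ℝ :=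
  sInf {c | ∃ v : Fin n → ℝ, l2sq v = 1 ∧ c = dotp v (A.mulVec v)}

/-- `‖v‖_p^p = ∑ |v i|^p` for a real exponent `p`. -/
def lpPow {α : Type*} [Fintype α] (p : ℝ) (v : α → ℝ) : ℝ := ∑ i, |v i| ^ p

/-- The `ℓ^p` norm with real exponent `p`. -/
def lpNorm {α : Type*} [Fintype α] (p : ℝ) (v : α → ℝ) : ℝ := (lpPow p v) ^ (1 / p)

/-- The continuous linear functional `v ↦ ⟨g, v⟩` on `ℝ^n`. -/
def dotCLM {n : ℕ} (g : Fin n → ℝ) : (Fin n → ℝ) →L[ℝ] ℝ :=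
  LinearMap.toContinuousLinearMap
    { toFun := fun v => dotp g v
      map_add' := fun x y => by
        simp [dotp, mul_add, Finset.sum_add_distrib]
      map_smul' := fun c x => by
        simp only [dotp, Pi.smul_apply, smul_eq_mul, RingHom.id_apply, Finset.mul_sum]
        exact Finset.sum_congr rfl fun i _ => by ring }

lemma idx_left (m : ℕ) [NeZero m] (i : Fin m) (j : ℤ) :
    idx m (((idx m ((i : ℤ) + j) : Fin m) : ℤ) - j) = i := by
  have hm : 0 < m := Nat.pos_of_ne_zero (NeZero.ne m)
  have hm' : (0 : ℤ) < (m : ℤ) := by exact_mod_cast hm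
  have h1 : 0 ≤ ((i : ℤ) + j) % (m : ℤ) := Int.emod_nonneg _ (ne_of_gt hm')
  apply Fin.ext
  simp only [idx]
  rw [Int.toNat_of_nonneg h1, Int.emod_sub_emod, add_sub_cancel_right,
    Int.emod_eq_of_lt (by positivity) (by exact_mod_cast i.2)]
  simp

/-- The shift as a permutation. -/
def shiftEquiv (m : ℕ) [NeZero m] (j : ℤ) : Fin m ≃ Fin m where
  toFun i := idx m ((i : ℤ) + j)
  invFun i := idx m ((i : ℤ) - j)
  left_inv i := idx_left m i j
  right_inv i := by
    have := idx_left m i (-j)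
    simpa [sub_eq_add_neg] using this

lemma pad_sum {k m : ℕ} (hkm : k ≤ m) (a : Fin k → ℝ) (x : Fin m → ℝ) :
    ∑ i, x i * pad k m a i = ∑ r, x (Fin.castLE hkm r) * a r := by
  symm
  have h : ∀ r : Fin k, x (Fin.castLE hkm r) * a r =
      x (Fin.castLE hkm r) * pad k m a (Fin.castLE hkm r) := by
    intro r
    simp [pad]
  rw [Finset.sum_congr rfl (fun r _ => h r)]
  apply Finset.sum_of_injOn (Fin.castLE hkm)
  · intro x _ y _ hxy
    exact Fin.castLE_injective hkm hxy
  · intro _ _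
    simp
  · intro i _ hi
    have : ¬ (i : ℕ) < k := by
      intro hlt
      apply hi
      exact ⟨⟨i, hlt⟩, by simp, by ext; simp⟩
    simp [pad, this]
  · intro _ _
    rfl

lemma rcirc_mulVec {k m : ℕ} [NeZero m] (hkm : k ≤ m) (a0 a : Fin k → ℝ) (i : Fin m) :
    (((rcirc k m a0)ᵀ).mulVec (pad k m a)) i = dotp (shiftTrunc hkm a0 i) a := by
  simp only [Matrix.mulVec, dotProduct, rcirc, Matrix.transpose_apply, Matrix.of_apply]
  rw [pad_sum hkm]
  rfl

lemma conv_dot {k m : ℕ} [NeZero m] (hkm : k ≤ m) (a0 a : Fin k → ℝ) (x : Fin m → ℝ) :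
    dotp (conv (pad k m a) x) (pad k m a0) = ∑ j, dotp (shiftTrunc hkm a0 j) a * x j := by
  simp only [← rcirc_mulVec hkm]
  simp only [dotp, conv, circ, Matrix.mulVec, dotProduct, rcirc, Matrix.transpose_apply,
    Matrix.of_apply, cshift, Finset.sum_mul]
  rw [Finset.sum_comm]
  refine Finset.sum_congr rfl fun j _ => ?_
  rw [← Equiv.sum_comp (shiftEquiv m (j : ℤ))]
  refine Finset.sum_congr rfl fun i _ => ?_
  simp only [shiftEquiv, Equiv.coe_fn_mk, idx_left, sub_neg_eq_add]
  ring

lemma l2sq_pad {k m : ℕ} (hkm : k ≤ m) (a : Fin k → ℝ) : l2sq (pad k m a) = l2sq a := by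
  have := pad_sum hkm a (pad k m a)
  simp only [l2sq, pow_two]
  rw [this]
  simp [pad]

lemma l2sq_trunc_le {k m : ℕ} [NeZero m] (hkm : k ≤ m) (a0 : Fin k → ℝ) (i : Fin m) :
    l2sq (shiftTrunc hkm a0 i) ≤ l2sq a0 := by
  rw [← l2sq_pad hkm a0]
  simp only [l2sq, shiftTrunc, unpad, cshift, sub_neg_eq_add]
  rw [← Equiv.sum_comp (shiftEquiv m (i : ℤ)) (fun j => pad k m a0 j ^ 2)]
  simp only [shiftEquiv, Equiv.coe_fn_mk]
  rw [← Finset.sum_image (s := Finset.univ) (g := Fin.castLE hkm)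
    (f := fun x : Fin m => pad k m a0 (idx m ((x : ℤ) + (i : ℤ))) ^ 2)]
  · exact Finset.sum_le_sum_of_subset_of_nonneg (Finset.subset_univ _) (fun _ _ _ => sq_nonneg _)
  · intro x _ y _ hxy
    exact Fin.castLE_injective hkm hxy

lemma inner_eq {k m : ℕ} [NeZero m] (hkm : k ≤ m) (lam : ℝ) (a0 a : Fin k → ℝ) (x : Fin m → ℝ) :
    phiHatInner k m lam a0 a x = l2sq (pad k m a0) / 2 +
      ∑ i, (x i ^ 2 / 2 - dotp (shiftTrunc hkm a0 i) a * x i + lam * |x i|) := by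
  rw [phiHatInner, conv_dot hkm]
  simp only [Finset.sum_add_distrib, Finset.sum_sub_distrib, l2sq, l1norm, Finset.mul_sum,
    Finset.sum_div]
  ring

lemma soft_pos {lam t : ℝ} (h0 : 0 < lam) (h : lam < t) : soft lam t = t - lam := by
  have : 0 < t := by linarith
  rw [soft, Real.sign_of_pos this, abs_of_pos this, max_eq_left (by linarith), one_mul]

lemma soft_neg {lam t : ℝ} (h0 : 0 < lam) (h : t < -lam) : soft lam t = t + lam := by
  have : t < 0 := by linarith
  rw [soft, Real.sign_of_neg this, abs_of_neg this, max_eq_left (by linarith)]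
  ring

lemma soft_zero {lam t : ℝ} (h : |t| ≤ lam) : soft lam t = 0 := by
  rw [soft, max_eq_right (by linarith), mul_zero]

lemma scalar_ge {lam : ℝ} (h0 : 0 < lam) (u x : ℝ) :
    -(max (|u| - lam) 0) ^ 2 / 2 + (x - soft lam u) ^ 2 / 2 ≤ x ^ 2 / 2 - u * x + lam * |x| := by
  have hx1 := le_abs_self x
  have hx2 := neg_abs_le x
  rcases le_or_gt |u| lam with h | h
  · rw [soft_zero h, max_eq_right (by linarith)]
    have : u * x ≤ |u| * |x| := by rw [← abs_mul]; exact le_abs_self _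
    nlinarith [abs_nonneg x]
  · rw [max_eq_left (by linarith)]
    rcases lt_abs.1 h with h' | h'
    · rw [soft_pos h0 h', abs_of_pos (by linarith : 0 < u)]
      nlinarith
    · rw [soft_neg h0 (by linarith), abs_of_neg (by linarith : u < 0)]
      nlinarith

lemma scalar_eq {lam : ℝ} (h0 : 0 < lam) (u : ℝ) :
    (soft lam u) ^ 2 / 2 - u * (soft lam u) + lam * |soft lam u| =
    -(max (|u| - lam) 0) ^ 2 / 2 := by
  rcases le_or_gt |u| lam with h | h
  · rw [soft_zero h, max_eq_right (by linarith)]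
    simp
  · rw [max_eq_left (by linarith)]
    rcases lt_abs.1 h with h' | h'
    · rw [soft_pos h0 h', abs_of_pos (by linarith : 0 < u), abs_of_pos (by linarith)]
      ring
    · rw [soft_neg h0 (by linarith), abs_of_neg (by linarith : u < 0), abs_of_neg (by linarith)]
      ring

/-- strict minimality of the soft thresholding -/
lemma inner_lt {k m : ℕ} [NeZero m] (hkm : k ≤ m) {lam : ℝ} (h0 : 0 < lam) (a0 a : Fin k → ℝ)
    (y x : Fin m → ℝ) (hy : ∀ i, y i = soft lam (dotp (shiftTrunc hkm a0 i) a)) (hxy : x ≠ y) :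
    phiHatInner k m lam a0 a y < phiHatInner k m lam a0 a x := by
  rw [inner_eq hkm, inner_eq hkm]
  obtain ⟨j, hj⟩ := Function.ne_iff.1 hxy
  have key : ∀ i, y i ^ 2 / 2 - dotp (shiftTrunc hkm a0 i) a * y i + lam * |y i| +
      (x i - y i) ^ 2 / 2 ≤ x i ^ 2 / 2 - dotp (shiftTrunc hkm a0 i) a * x i + lam * |x i| := by
    intro i
    rw [hy i, scalar_eq h0]
    exact scalar_ge h0 _ _
  have hpos : 0 < (x j - y j) ^ 2 := by
    have : x j - y j ≠ 0 := sub_ne_zero.2 hj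
    positivity
  gcongr 1
  apply Finset.sum_lt_sum
  · intro i _
    nlinarith [key i, sq_nonneg (x i - y i)]
  · exact ⟨j, Finset.mem_univ _, by linarith [key j]⟩

lemma phiHat_eq {k m : ℕ} [NeZero m] (hkm : k ≤ m) {lam : ℝ} (h0 : 0 < lam) (a0 a : Fin k → ℝ) :
    phiHat k m lam a0 a = l2sq (pad k m a0) / 2 -
      (∑ i, (max (|dotp (shiftTrunc hkm a0 i) a| - lam) 0) ^ 2) / 2 := by
  have hv : phiHatInner k m lam a0 a (fun i => soft lam (dotp (shiftTrunc hkm a0 i) a)) =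
      l2sq (pad k m a0) / 2 -
      (∑ i, (max (|dotp (shiftTrunc hkm a0 i) a| - lam) 0) ^ 2) / 2 := by
    rw [inner_eq hkm]
    simp only [scalar_eq h0]
    rw [← Finset.sum_div, Finset.sum_neg_distrib]
    ring
  rw [← hv]
  apply IsLeast.csInf_eq
  refine ⟨⟨_, rfl⟩, ?_⟩
  rintro _ ⟨x, rfl⟩
  by_cases hx : x = (fun i => soft lam (dotp (shiftTrunc hkm a0 i) a))
  · rw [hx]
  · exact (inner_lt hkm h0 a0 a _ x (fun _ => rfl) hx).le

lemma dotp_eq {α : Type*} [Fintype α] (u v : α → ℝ) : dotp u v = u ⬝ᵥ v := rfl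

lemma l2sq_eq {α : Type*} [Fintype α] (v : α → ℝ) : l2sq v = v ⬝ᵥ v := by
  simp [l2sq, dotProduct, pow_two]

lemma l2sq_nonneg {α : Type*} [Fintype α] (v : α → ℝ) : 0 ≤ l2sq v :=
  Finset.sum_nonneg fun _ _ => sq_nonneg _

lemma l2norm_sq {α : Type*} [Fintype α] (v : α → ℝ) : l2norm v ^ 2 = l2sq v :=
  Real.sq_sqrt (l2sq_nonneg v)

lemma l2norm_one {α : Type*} [Fintype α] (v : α → ℝ) : l2norm v = 1 ↔ v ⬝ᵥ v = 1 := by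
  rw [l2norm, Real.sqrt_eq_one, l2sq_eq]

lemma opt_cond {k : ℕ} {J : Type*} [Fintype J] {lam : ℝ} (b : J → Fin k → ℝ)
    (a : Fin k → ℝ) (ha : a ⬝ᵥ a = 1) (σ : J → ℝ) (hσ : ∀ j, σ j = 1 ∨ σ j = -1)
    (hb : ∀ j, lam < σ j * (b j ⬝ᵥ a))
    (hloc : ∃ ε > (0 : ℝ), ∀ a' : Fin k → ℝ, l2norm a' = 1 → l2norm (a' - a) < ε →
      ∑ j, (max (|b j ⬝ᵥ a'| - lam) 0) ^ 2 ≤ ∑ j, (σ j * (b j ⬝ᵥ a) - lam) ^ 2)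
    (v : Fin k → ℝ) (hv : a ⬝ᵥ v = 0) :
    ∑ j, (b j ⬝ᵥ a - σ j * lam) * (b j ⬝ᵥ v) ≤ 0 ∧
    (∑ j, (b j ⬝ᵥ a - σ j * lam) * (b j ⬝ᵥ v) = 0 →
      ∑ j, (b j ⬝ᵥ v) ^ 2 ≤ (v ⬝ᵥ v) * ∑ j, (b j ⬝ᵥ a - σ j * lam) * (b j ⬝ᵥ a)) := by
  obtain ⟨ε, hε, hloc⟩ := hloc
  set N := v ⬝ᵥ v with hN
  have hN0 : 0 ≤ N := by rw [hN, ← l2sq_eq]; exact l2sq_nonneg v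
  set Y := ∑ j, (b j ⬝ᵥ a - σ j * lam) * (b j ⬝ᵥ v) with hY
  set μ := ∑ j, (b j ⬝ᵥ a - σ j * lam) * (b j ⬝ᵥ a) with hμ
  have hD : ∀ s : ℝ, 0 < 1 + s ^ 2 * N := fun s => by positivity
  -- the curve
  let c : ℝ → Fin k → ℝ := fun s =>
    ((1 - s ^ 2 * N) / (1 + s ^ 2 * N)) • a + (2 * s / (1 + s ^ 2 * N)) • v
  have hc : Continuous c := by
    have h1 : Continuous fun s : ℝ => (1 - s ^ 2 * N) / (1 + s ^ 2 * N) :=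
      Continuous.div (by fun_prop) (by fun_prop) (fun s => (hD s).ne')
    have h2 : Continuous fun s : ℝ => 2 * s / (1 + s ^ 2 * N) :=
      Continuous.div (by fun_prop) (by fun_prop) (fun s => (hD s).ne')
    exact (h1.smul continuous_const).add (h2.smul continuous_const)
  have hc0 : c 0 = a := by simp [c]
  have hcn : ∀ s, l2norm (c s) = 1 := by
    intro s
    rw [l2norm_one]
    simp only [c, add_dotProduct, dotProduct_add, smul_dotProduct, dotProduct_smul, smul_eq_mul,
      hv, dotProduct_comm v a, ha, ← hN]
    have := (hD s).ne'
    field_simp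
    ring
  have hbc : ∀ j s, b j ⬝ᵥ c s = b j ⬝ᵥ a +
      2 * s * (b j ⬝ᵥ v - s * N * (b j ⬝ᵥ a)) / (1 + s ^ 2 * N) := by
    intro j s
    simp only [c, dotProduct_add, dotProduct_smul, smul_eq_mul]
    have := (hD s).ne'
    field_simp
    ring
  have e1 : ∀ᶠ s in nhds (0 : ℝ), l2norm (c s - a) < ε := by
    have : Continuous fun s => l2norm (c s - a) := by
      unfold l2norm l2sq
      simp only [Pi.sub_apply]
      fun_prop
    apply this.continuousAt.eventually_lt continuousAt_const
    simp [hc0, l2norm, l2sq, hε]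
  have e2 : ∀ᶠ s in nhds (0 : ℝ), ∀ j, lam < σ j * (b j ⬝ᵥ c s) := by
    rw [Filter.eventually_all]
    intro j
    have : Continuous fun s => σ j * (b j ⬝ᵥ c s) := by
      unfold dotProduct
      fun_prop
    apply continuousAt_const.eventually_lt this.continuousAt
    simpa [hc0] using hb j
  have e3 : ∀ᶠ s in nhds (0 : ℝ), s * (1 + s ^ 2 * N) * (Y - s * N * μ) +
      s ^ 2 * ∑ j, (b j ⬝ᵥ v - s * N * (b j ⬝ᵥ a)) ^ 2 ≤ 0 := by
    filter_upwards [e1, e2] with s h1 h2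
    have h3 := hloc (c s) (hcn s) h1
    have h4 : ∑ j, (σ j * (b j ⬝ᵥ c s) - lam) ^ 2 ≤ ∑ j, (σ j * (b j ⬝ᵥ a) - lam) ^ 2 := by
      refine le_trans (Finset.sum_le_sum fun j _ => ?_) h3
      have h5 : σ j * (b j ⬝ᵥ c s) ≤ |b j ⬝ᵥ c s| := by
        rcases hσ j with h | h <;> rw [h]
        · simpa using le_abs_self _
        · simpa using neg_le_abs _
      have h6 := h2 j
      have h7 := le_max_left (|b j ⬝ᵥ c s| - lam) 0
      exact pow_le_pow_left₀ (by linarith) (by linarith) 2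
    rw [← sub_nonpos, ← Finset.sum_sub_distrib] at h4
    have h5 : s * (1 + s ^ 2 * N) * (Y - s * N * μ) +
      s ^ 2 * ∑ j, (b j ⬝ᵥ v - s * N * (b j ⬝ᵥ a)) ^ 2 = (1 + s ^ 2 * N) ^ 2 / 4 *
      ∑ j, ((σ j * (b j ⬝ᵥ c s) - lam) ^ 2 - (σ j * (b j ⬝ᵥ a) - lam) ^ 2) := by
      rw [hY, hμ]
      simp only [Finset.mul_sum, ← Finset.sum_sub_distrib, ← Finset.sum_add_distrib]
      refine Finset.sum_congr rfl fun j _ => ?_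
      rw [hbc]
      have hs : σ j ^ 2 = 1 := by rcases hσ j with h | h <;> rw [h] <;> norm_num
      have := (hD s).ne'
      field_simp
      ring_nf
      simp only [hs]
      ring
    rw [h5]
    exact mul_nonpos_of_nonneg_of_nonpos (by positivity) h4
  have e4 : ∀ᶠ s in nhdsWithin (0 : ℝ) (Set.Ioi 0), s * (1 + s ^ 2 * N) * (Y - s * N * μ) +
      s ^ 2 * ∑ j, (b j ⬝ᵥ v - s * N * (b j ⬝ᵥ a)) ^ 2 ≤ 0 := e3.filter_mono nhdsWithin_le_nhds
  constructor
  · have ht : Filter.Tendsto (fun s : ℝ => (1 + s ^ 2 * N) * (Y - s * N * μ) +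
      s * ∑ j, (b j ⬝ᵥ v - s * N * (b j ⬝ᵥ a)) ^ 2) (nhdsWithin (0 : ℝ) (Set.Ioi 0)) (nhds Y) := by
      have : Continuous (fun s : ℝ => (1 + s ^ 2 * N) * (Y - s * N * μ) +
        s * ∑ j, (b j ⬝ᵥ v - s * N * (b j ⬝ᵥ a)) ^ 2) := by fun_prop
      have h := this.tendsto 0
      simp at h
      exact h.mono_left nhdsWithin_le_nhds
    refine le_of_tendsto ht ?_
    filter_upwards [e4, self_mem_nhdsWithin] with s h1 h2
    have h2 : 0 < s := h2
    by_contra hcon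
    push Not at hcon
    have := mul_pos h2 hcon
    linarith
  · intro hY0
    have ht : Filter.Tendsto (fun s : ℝ => ∑ j, (b j ⬝ᵥ v - s * N * (b j ⬝ᵥ a)) ^ 2 -
        (1 + s ^ 2 * N) * (N * μ)) (nhdsWithin (0 : ℝ) (Set.Ioi 0))
        (nhds (∑ j, (b j ⬝ᵥ v) ^ 2 - N * μ)) := by
      have : Continuous (fun s : ℝ => ∑ j, (b j ⬝ᵥ v - s * N * (b j ⬝ᵥ a)) ^ 2 -
        (1 + s ^ 2 * N) * (N * μ)) := by fun_prop
      have h := this.tendsto 0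
      simp at h
      exact h.mono_left nhdsWithin_le_nhds
    have := le_of_tendsto (b := 0) ht ?_
    · linarith
    filter_upwards [e4, self_mem_nhdsWithin] with s h1 h2
    have h2 : 0 < s := h2
    rw [hY0] at h1
    by_contra hcon
    push Not at hcon
    have := mul_pos (pow_pos h2 2) hcon
    linarith

lemma opNorm_bound {J : Type*} [Fintype J] (A : Matrix J J ℝ) {δ : ℝ}
    (h : opNorm A < δ) (e : J → ℝ) : l2sq (A.mulVec e) ≤ δ ^ 2 * l2sq e := by
  have hbdd : BddAbove {c | ∃ v : J → ℝ, l2norm v = 1 ∧ c = l2norm (A.mulVec v)} := by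
    refine ⟨Real.sqrt (∑ i, ∑ j, A i j ^ 2), ?_⟩
    rintro _ ⟨v, hv, rfl⟩
    apply Real.sqrt_le_sqrt
    apply Finset.sum_le_sum
    intro i _
    have h1 := Finset.sum_mul_sq_le_sq_mul_sq Finset.univ (A i) v
    have h2 : ∑ i, v i ^ 2 = 1 := by
      have := l2norm_sq v
      rw [hv] at this
      simpa [l2sq] using this.symm
    rw [h2, mul_one] at h1
    exact h1
  rcases (l2sq_nonneg e).eq_or_lt with h0 | h0
  · have : e = 0 := by
      funext i
      have h1 := (Finset.sum_eq_zero_iff_of_nonneg (fun i _ => sq_nonneg (e i))).1 h0.symm i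
        (Finset.mem_univ _)
      simpa using h1
    simp [this, l2sq]
  · have hn : 0 < l2norm e := Real.sqrt_pos.2 h0
    have h1 : l2norm ((l2norm e)⁻¹ • e) = 1 := by
      rw [l2norm_one, smul_dotProduct, dotProduct_smul, ← l2sq_eq, ← l2norm_sq]
      simp only [smul_eq_mul]
      field_simp
    have h2 : l2norm (A.mulVec ((l2norm e)⁻¹ • e)) ≤ opNorm A := le_csSup hbdd ⟨_, h1, rfl⟩
    have h3 : l2sq (A.mulVec ((l2norm e)⁻¹ • e)) ≤ δ ^ 2 := by
      rw [← l2norm_sq]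
      exact pow_le_pow_left₀ (Real.sqrt_nonneg _) (h2.trans h.le) 2
    rw [Matrix.mulVec_smul, l2sq_eq, smul_dotProduct, dotProduct_smul, ← l2sq_eq] at h3
    simp only [smul_eq_mul] at h3
    rw [← l2norm_sq e]
    have h4 := mul_le_mul_of_nonneg_left h3 (sq_nonneg (l2norm e))
    have h5 : l2norm e ^ 2 * ((l2norm e)⁻¹ * ((l2norm e)⁻¹ * l2sq (A.mulVec e))) =
      l2sq (A.mulVec e) := by field_simp
    linarith

lemma core_num {lam δ δ' n t al μ s : ℝ} (h0 : 0 < lam) (h1 : lam < 1) (hδ : δ = lam ^ 2 / 6)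
    (hδ' : δ' ^ 2 ≤ 2 * δ ^ 2) (hδ'0 : 0 ≤ δ') (hn : 0 < n) (hn1 : n ≤ 1) (hs : s = 1 ∨ s = -1)
    (ht : lam < s * (n * t)) (ht1 : t ^ 2 ≤ 1) (hd : (t - al) ^ 2 ≤ δ' ^ 2)
    (hμ : 0 < μ) (hal : μ * al = n * (n * t - s * lam)) : μ < (1 - δ) * n ^ 2 := by
  have hδ0 : 0 < δ := by rw [hδ]; positivity
  have hδ1 : δ < lam / 6 := by rw [hδ]; nlinarith
  have hd2 : δ' ≤ 2 * δ := by
    apply le_of_sq_le_sq _ (by linarith) |> fun h => h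
    nlinarith
  have hss : s ^ 2 = 1 := by rcases hs with h | h <;> rw [h] <;> norm_num
  obtain ⟨T, hT⟩ : ∃ T, T = s * t := ⟨_, rfl⟩
  obtain ⟨A, hA⟩ : ∃ A, A = s * al := ⟨_, rfl⟩
  have hT1 : T ≤ 1 := by
    have : T ^ 2 ≤ 1 := by rw [hT, mul_pow, hss]; linarith
    nlinarith
  have hnT : lam < n * T := by rw [hT]; linarith
  have hTpos : 0 < T := by
    by_contra h
    push Not at h
    nlinarith
  have hTA : T - A ≤ δ' := by
    have : (T - A) ^ 2 ≤ δ' ^ 2 := by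
      have : (T - A) ^ 2 = (t - al) ^ 2 := by
        rw [hT, hA, ← mul_sub, mul_pow, hss, one_mul]
      linarith
    exact le_of_abs_le (abs_le_of_sq_le_sq this hδ'0)
  have hA2 : μ * A = n * (n * T - lam) := by
    have : μ * A = s * (μ * al) := by rw [hA]; ring
    rw [this, hal, hT]
    linear_combination (-n * lam) * hss
  have hApos : 0 < A := by
    have h : 0 < μ * A := by
      rw [hA2]; exact mul_pos hn (by linarith)
    exact (pos_iff_pos_of_mul_pos h).1 hμ
  have key : n * (n * T - lam) < (1 - δ) * n ^ 2 * A := by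
    have h2 : n * T - lam < (1 - δ) * n * A := by
      have h3 : (1 - δ) * n * (T - δ') ≤ (1 - δ) * n * A :=
        mul_le_mul_of_nonneg_left (by linarith) (mul_nonneg (by linarith) hn.le)
      have h4 : n * (δ * T + δ') ≤ 1 * (3 * δ) := by
        apply mul_le_mul hn1 _ (by positivity) zero_le_one
        nlinarith
      nlinarith [mul_nonneg (mul_nonneg hδ0.le hn.le) hδ'0]
    nlinarith
  rw [← hA2] at key
  exact lt_of_mul_lt_mul_right key hApos.le

lemma core_num2 {δ μ ρ p q n₁ n₂ : ℝ} (hδ0 : 0 < δ) (hδ1 : δ < 1 / 6) (hμ0 : 0 < μ)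
    (hρ1 : -δ ≤ ρ) (hρ2 : ρ ≤ δ) (hp0 : p ≠ 0) (hi : μ < (1 - δ) * n₁ ^ 2)
    (hj : μ < (1 - δ) * n₂ ^ 2)
    (h4 : n₁ ^ 2 * (q - p * ρ) ^ 2 + n₂ ^ 2 * (q * ρ - p) ^ 2 ≤
      μ * (q ^ 2 + p ^ 2 - 2 * ρ * p * q)) : False := by
  have hV : 0 < q ^ 2 + p ^ 2 - 2 * ρ * p * q := by
    have e : q ^ 2 + p ^ 2 - 2 * ρ * p * q = (q - ρ * p) ^ 2 + (1 - ρ ^ 2) * p ^ 2 := by ring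
    have : 0 < p ^ 2 := by positivity
    have h5 : 0 < 1 - ρ ^ 2 := by nlinarith
    rw [e]
    positivity
  obtain ⟨ν, hν⟩ : ∃ ν, ν = μ / (1 - δ) := ⟨_, rfl⟩
  have hνμ : (1 - δ) * ν = μ := by
    have : 1 - δ ≠ 0 := by linarith
    rw [hν]; field_simp
  have hν0 : 0 < ν := by rw [hν]; exact div_pos hμ0 (by linarith)
  have hi' : ν < n₁ ^ 2 := by
    rw [← hνμ] at hi
    exact lt_of_mul_lt_mul_left hi (by linarith)
  have hj' : ν < n₂ ^ 2 := by
    rw [← hνμ] at hj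
    exact lt_of_mul_lt_mul_left hj (by linarith)
  have hX : (1 - δ) * (q ^ 2 + p ^ 2 - 2 * ρ * p * q) ≤ (q - p * ρ) ^ 2 + (q * ρ - p) ^ 2 := by
    have e : (q - p * ρ) ^ 2 + (q * ρ - p) ^ 2 - (1 - δ) * (q ^ 2 + p ^ 2 - 2 * ρ * p * q)
      = ((δ + ρ) * (1 + ρ) * (p - q) ^ 2 + (δ - ρ) * (1 - ρ) * (p + q) ^ 2) / 2 := by ring
    have e1 : 0 ≤ (δ + ρ) * (1 + ρ) * (p - q) ^ 2 :=
      mul_nonneg (mul_nonneg (by linarith) (by linarith)) (sq_nonneg _)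
    have e2 : 0 ≤ (δ - ρ) * (1 - ρ) * (p + q) ^ 2 :=
      mul_nonneg (mul_nonneg (by linarith) (by linarith)) (sq_nonneg _)
    linarith
  have hXpos : 0 < (q - p * ρ) ^ 2 + (q * ρ - p) ^ 2 :=
    lt_of_lt_of_le (mul_pos (by linarith) hV) hX
  have hlt : ν * ((q - p * ρ) ^ 2 + (q * ρ - p) ^ 2) <
      n₁ ^ 2 * (q - p * ρ) ^ 2 + n₂ ^ 2 * (q * ρ - p) ^ 2 := by
    by_cases hz : q - p * ρ = 0
    · rw [hz] at hXpos ⊢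
      nlinarith
    · have : 0 < (q - p * ρ) ^ 2 := by positivity
      nlinarith [sq_nonneg (q * ρ - p)]
  have hle : ν * ((1 - δ) * (q ^ 2 + p ^ 2 - 2 * ρ * p * q)) ≤
      ν * ((q - p * ρ) ^ 2 + (q * ρ - p) ^ 2) := mul_le_mul_of_nonneg_left hX hν0.le
  have : ν * ((1 - δ) * (q ^ 2 + p ^ 2 - 2 * ρ * p * q)) =
      μ * (q ^ 2 + p ^ 2 - 2 * ρ * p * q) := by rw [← hνμ]; ring
  linarith

lemma core {k : ℕ} {J : Type*} [Fintype J] [DecidableEq J] [Nonempty J] {lam : ℝ} (h0 : 0 < lam)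
    (h1 : lam < 1) (b w : J → Fin k → ℝ) (n : J → ℝ) (hn : ∀ j, 0 < n j) (hn1 : ∀ j, n j ≤ 1)
    (hbw : ∀ j, b j = n j • w j) (hw : ∀ j, w j ⬝ᵥ w j = 1)
    (a : Fin k → ℝ) (ha : a ⬝ᵥ a = 1) (σ : J → ℝ) (hσ : ∀ j, σ j = 1 ∨ σ j = -1)
    (hb : ∀ j, lam < σ j * (b j ⬝ᵥ a))
    (hloc : ∃ ε > (0 : ℝ), ∀ a' : Fin k → ℝ, l2norm a' = 1 → l2norm (a' - a) < ε →
      ∑ j, (max (|b j ⬝ᵥ a'| - lam) 0) ^ 2 ≤ ∑ j, (σ j * (b j ⬝ᵥ a) - lam) ^ 2)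
    (hop : ∀ e : J → ℝ, ∑ i, (w i ⬝ᵥ (∑ j, e j • w j) - e i) ^ 2 ≤ (lam ^ 2 / 6) ^ 2 * ∑ i, e i ^ 2) :
    ∃ τ, (∀ j, j = τ) ∧ a = σ τ • w τ := by
  have hopt := opt_cond b a ha σ hσ hb hloc
  have hss : ∀ j, σ j ^ 2 = 1 := fun j => by rcases hσ j with h | h <;> rw [h] <;> norm_num
  set μ := ∑ j, (b j ⬝ᵥ a - σ j * lam) * (b j ⬝ᵥ a) with hμ
  have hμ0 : 0 < μ := by
    apply Finset.sum_pos _ Finset.univ_nonempty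
    intro j _
    have : (b j ⬝ᵥ a - σ j * lam) * (b j ⬝ᵥ a) =
        (σ j * (b j ⬝ᵥ a) - lam) * (σ j * (b j ⬝ᵥ a)) := by
      linear_combination (-(b j ⬝ᵥ a) ^ 2) * hss j
    rw [this]
    have := hb j
    exact mul_pos (by linarith) (by linarith)
  obtain ⟨g, hg⟩ : ∃ g, g = ∑ j, (b j ⬝ᵥ a - σ j * lam) • b j := ⟨_, rfl⟩
  have hgv : ∀ v, ∑ j, (b j ⬝ᵥ a - σ j * lam) * (b j ⬝ᵥ v) = g ⬝ᵥ v := by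
    intro v
    rw [hg, sum_dotProduct]
    simp only [smul_dotProduct, smul_eq_mul]
  have hga : g = μ • a := by
    have hμ' : g ⬝ᵥ a = μ := by rw [hμ, ← hgv]
    have hav : a ⬝ᵥ (g - μ • a) = 0 := by
      rw [dotProduct_sub, dotProduct_smul, ha, dotProduct_comm, hμ']
      simp
    have h2 := (hopt _ hav).1
    rw [hgv] at h2
    have h3 : (g - μ • a) ⬝ᵥ (g - μ • a) ≤ 0 := by
      rw [sub_dotProduct, smul_dotProduct, hav]
      simpa using h2
    have h4 : (g - μ • a) ⬝ᵥ (g - μ • a) = 0 :=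
      le_antisymm h3 (by rw [← l2sq_eq]; exact l2sq_nonneg _)
    exact sub_eq_zero.1 (dotProduct_self_eq_zero.1 h4)
  have hsec : ∀ v, a ⬝ᵥ v = 0 → ∑ j, (b j ⬝ᵥ v) ^ 2 ≤ (v ⬝ᵥ v) * μ := by
    intro v hv
    apply (hopt v hv).2
    rw [hgv, hga, smul_dotProduct, hv, smul_zero]
  -- coefficients
  obtain ⟨al, hal⟩ : ∃ al : J → ℝ, ∀ j, al j = n j * (n j * (w j ⬝ᵥ a) - σ j * lam) / μ :=
    ⟨_, fun _ => rfl⟩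
  have hbwa : ∀ j v, b j ⬝ᵥ v = n j * (w j ⬝ᵥ v) := by
    intro j v
    rw [hbw, smul_dotProduct, smul_eq_mul]
  have haw : a = ∑ j, al j • w j := by
    have h2 : a = μ⁻¹ • g := by
      rw [hga, smul_smul, inv_mul_cancel₀ hμ0.ne', one_smul]
    rw [h2, hg, Finset.smul_sum]
    refine Finset.sum_congr rfl fun j _ => ?_
    rw [hbwa, hbw, smul_smul, smul_smul, hal]
    congr 1
    field_simp
  have hαμ : ∀ j, μ * al j = n j * (n j * (w j ⬝ᵥ a) - σ j * lam) := by
    intro j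
    rw [hal]
    field_simp
  have hop1 := hop al
  rw [← haw] at hop1
  have ht1 : ∀ j, (w j ⬝ᵥ a) ^ 2 ≤ 1 := by
    intro j
    have h2 := Finset.sum_mul_sq_le_sq_mul_sq Finset.univ (w j) a
    have h3 : ∑ i, w j i ^ 2 = 1 := by rw [← hw j, ← l2sq_eq, l2sq]
    have h4 : ∑ i, a i ^ 2 = 1 := by rw [← ha, ← l2sq_eq, l2sq]
    rw [h3, h4, one_mul] at h2
    exact h2
  obtain ⟨δ, hδ⟩ : ∃ δ, δ = lam ^ 2 / 6 := ⟨_, rfl⟩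
  rw [← hδ] at hop1
  have hδ0 : 0 < δ := by rw [hδ]; positivity
  have hδ1 : δ < 1 / 6 := by rw [hδ]; nlinarith
  have hS : ∑ j, al j ^ 2 ≤ 2 := by
    have h2 : ∑ j, al j * (w j ⬝ᵥ a) = 1 := by
      rw [← ha]
      nth_rw 3 [haw]
      rw [dotProduct_sum]
      exact Finset.sum_congr rfl fun j _ => by
        rw [dotProduct_smul, smul_eq_mul, dotProduct_comm a]
    have h3 := Finset.sum_mul_sq_le_sq_mul_sq Finset.univ (fun j => w j ⬝ᵥ a - al j) al
    have h4 : ∑ j, (w j ⬝ᵥ a - al j) * al j = 1 - ∑ j, al j ^ 2 := by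
      rw [← h2, ← Finset.sum_sub_distrib]
      exact Finset.sum_congr rfl fun j _ => by ring
    rw [h4] at h3
    set S := ∑ j, al j ^ 2
    have hS0 : 0 ≤ S := Finset.sum_nonneg fun _ _ => sq_nonneg _
    have h5 : (1 - S) ^ 2 ≤ (δ * S) ^ 2 := by nlinarith [mul_le_mul_of_nonneg_right hop1 hS0]
    have h6 := abs_le_of_sq_le_sq h5 (by positivity)
    have h7 := (abs_le.1 h6).1
    nlinarith
  have hkey : ∀ j, μ < (1 - δ) * n j ^ 2 := by
    intro j
    refine core_num (δ' := Real.sqrt (2 * δ ^ 2)) h0 h1 hδ (Real.sq_sqrt (by positivity)).le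
      (Real.sqrt_nonneg _) (hn j) (hn1 j) (hσ j) (t := w j ⬝ᵥ a) ?_ (ht1 j) ?_ hμ0 (hαμ j)
    · rw [← hbwa]; exact hb j
    · rw [Real.sq_sqrt (by positivity)]
      have h2 := Finset.single_le_sum (f := fun i => (w i ⬝ᵥ a - al i) ^ 2)
        (fun i _ => sq_nonneg _) (Finset.mem_univ j)
      nlinarith
  have hsub : ∀ i j : J, i = j := by
    intro i j
    by_contra hij
    obtain ⟨ρ, hρ⟩ : ∃ ρ, ρ = w i ⬝ᵥ w j := ⟨_, rfl⟩
    have hρ2 : ρ ^ 2 ≤ δ ^ 2 := by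
      have h2 := hop (Pi.single j 1)
      have h3 := Finset.single_le_sum (f := fun i => (w i ⬝ᵥ (∑ l, (Pi.single j 1 : J → ℝ) l • w l)
        - (Pi.single j 1 : J → ℝ) i) ^ 2) (fun i _ => sq_nonneg _) (Finset.mem_univ i)
      have h4 : ∑ l, (Pi.single j 1 : J → ℝ) l • w l = w j := by
        simp [Pi.single_apply, ite_smul]
      have h5 : ∑ l, (Pi.single j 1 : J → ℝ) l ^ 2 = 1 := by
        simp [Pi.single_apply]
      rw [h5] at h2
      have h6 := h3.trans h2
      simp only [h4] at h6
      rw [Pi.single_eq_of_ne hij, sub_zero, ← hρ, ← hδ, mul_one] at h6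
      exact h6
    have hρa := abs_le.1 (abs_le_of_sq_le_sq hρ2 hδ0.le)
    obtain ⟨p, hp⟩ : ∃ p, p = w i ⬝ᵥ a := ⟨_, rfl⟩
    obtain ⟨q, hq⟩ : ∃ q, q = w j ⬝ᵥ a := ⟨_, rfl⟩
    have hp0 : p ≠ 0 := by
      intro h
      have := hb i
      rw [hbwa, ← hp, h] at this
      simp at this
      linarith
    have h2 := hsec (q • w i - p • w j) (by
      rw [dotProduct_sub, dotProduct_smul, dotProduct_smul, dotProduct_comm a, dotProduct_comm a,
        ← hp, ← hq, smul_eq_mul, smul_eq_mul]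
      ring)
    have h3 : (b i ⬝ᵥ (q • w i - p • w j)) ^ 2 + (b j ⬝ᵥ (q • w i - p • w j)) ^ 2 ≤
        ∑ l, (b l ⬝ᵥ (q • w i - p • w j)) ^ 2 := by
      rw [← Finset.sum_pair (f := fun l => (b l ⬝ᵥ (q • w i - p • w j)) ^ 2) hij]
      exact Finset.sum_le_sum_of_subset_of_nonneg (Finset.subset_univ _)
        (fun _ _ _ => sq_nonneg _)
    have h4 := h3.trans h2
    simp only [hbwa, dotProduct_sub, sub_dotProduct, dotProduct_smul, smul_dotProduct,
      smul_eq_mul, hw, dotProduct_comm (w j) (w i), ← hρ] at h4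
    -- numeric contradiction
    refine core_num2 (q := q) hδ0 hδ1 hμ0 hρa.1 hρa.2 hp0 (hkey i) (hkey j) ?_
    refine le_trans (le_of_eq ?_) (h4.trans (le_of_eq ?_)) <;> ring
  obtain ⟨τ⟩ := ‹Nonempty J›
  refine ⟨τ, fun j => hsub j τ, ?_⟩
  have h2 : a = al τ • w τ := by
    rw [haw]
    apply Finset.sum_eq_single τ
    · intro j _ hj
      exact absurd (hsub j τ) hj
    · simp
  have h3 : al τ ^ 2 = 1 := by
    rw [h2, smul_dotProduct, dotProduct_smul, hw] at ha
    simp only [smul_eq_mul] at ha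
    linarith
  have h4 : 0 < σ τ * al τ := by
    have := hb τ
    rw [hbwa, h2, dotProduct_smul, hw] at this
    simp only [smul_eq_mul, mul_one] at this
    have hnn := hn τ
    have h5 : 0 < n τ * (σ τ * al τ) := by linarith
    exact (pos_iff_pos_of_mul_pos h5).1 hnn
  have h5 : al τ = σ τ := by
    rcases hσ τ with h | h <;> rw [h] at h4 ⊢ <;> nlinarith
  rw [← h5]
  exact h2

lemma gram_eq {k : ℕ} {J : Type*} [Fintype J] [DecidableEq J] (w : J → Fin k → ℝ) (e : J → ℝ) :
    l2sq (((Matrix.of fun (r : Fin k) (j : J) => w j r)ᵀ *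
      (Matrix.of fun (r : Fin k) (j : J) => w j r) - (1 : Matrix J J ℝ)).mulVec e) =
    ∑ i, (w i ⬝ᵥ (∑ j, e j • w j) - e i) ^ 2 := by
  have h : (Matrix.of fun (r : Fin k) (j : J) => w j r).mulVec e = ∑ j, e j • w j := by
    funext r
    simp [Matrix.mulVec, dotProduct, Finset.sum_apply, mul_comm]
  rw [Matrix.sub_mulVec, Matrix.one_mulVec, ← Matrix.mulVec_mulVec, h]
  rfl

lemma soft_ne {lam u : ℝ} (h0 : 0 < lam) : soft lam u ≠ 0 ↔ lam < |u| := by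
  constructor
  · intro h
    by_contra hc
    exact h (soft_zero (not_lt.1 hc))
  · intro h
    rcases lt_abs.1 h with h' | h'
    · rw [soft_pos h0 h']; linarith
    · rw [soft_neg h0 (by linarith)]; linarith

/-- under the near-orthogonality condition on shift truncations, every
local minimizer of `φ̂` on the sphere either has `S_λ((Č_{a0})* ι ā) = 0` (and is a
global maximizer), or is a normalized signed shift truncation of `a0`, with the
inner problem at `ā` uniquely minimized by `ε S_λ(‖ι* s_{−τ}[ι a0]‖₂) e_τ`. -/
theorem stmt_0 {k m : ℕ} [NeZero m] (hkm : k ≤ m) (lam : ℝ) (h0 : 0 < lam)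
    (h1 : lam < 1) (a0 : Fin k → ℝ) (ha0 : l2norm a0 = 1)
    (hW : ∀ I : Set (Fin m),
      (∃ a : Fin k → ℝ, l2norm a = 1 ∧
        I = {i | softvec lam (((rcirc k m a0)ᵀ).mulVec (pad k m a)) i ≠ 0}) →
      I.Nonempty →
      opNorm
        ((Matrix.of fun (r : Fin k) (j : ↥I) =>
            shiftTrunc hkm a0 (j : Fin m) r / l2norm (shiftTrunc hkm a0 (j : Fin m)))ᵀ *
          (Matrix.of fun (r : Fin k) (j : ↥I) =>
            shiftTrunc hkm a0 (j : Fin m) r / l2norm (shiftTrunc hkm a0 (j : Fin m))) -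
          (1 : Matrix ↥I ↥I ℝ)) < lam ^ 2 / 6)
    (abar : Fin k → ℝ) (habar : l2norm abar = 1)
    (hlocmin : ∃ ε > (0 : ℝ), ∀ a : Fin k → ℝ, l2norm a = 1 → l2norm (a - abar) < ε →
      phiHat k m lam a0 abar ≤ phiHat k m lam a0 a) :
    (softvec lam (((rcirc k m a0)ᵀ).mulVec (pad k m abar)) = 0 ∧
      ∀ a : Fin k → ℝ, l2norm a = 1 → phiHat k m lam a0 a ≤ phiHat k m lam a0 abar) ∨
    (∃ ε : ℝ, (ε = 1 ∨ ε = -1) ∧ ∃ τ : Fin m,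
      abar = (fun r => ε * shiftTrunc hkm a0 τ r / l2norm (shiftTrunc hkm a0 τ)) ∧
      ∀ x : Fin m → ℝ,
        x ≠ (fun i => if i = τ then ε * soft lam (l2norm (shiftTrunc hkm a0 τ)) else 0) →
        phiHatInner k m lam a0 abar
            (fun i => if i = τ then ε * soft lam (l2norm (shiftTrunc hkm a0 τ)) else 0)
          < phiHatInner k m lam a0 abar x) := by
  by_cases hI : softvec lam (((rcirc k m a0)ᵀ).mulVec (pad k m abar)) = 0
  · left
    refine ⟨hI, fun a _ => ?_⟩
    rw [phiHat_eq hkm h0, phiHat_eq hkm h0]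
    have hz : ∑ i, (max (|dotp (shiftTrunc hkm a0 i) abar| - lam) 0) ^ 2 = 0 := by
      apply Finset.sum_eq_zero
      intro i _
      have h2 := congrFun hI i
      rw [softvec, rcirc_mulVec hkm] at h2
      have h3 : ¬ lam < |dotp (shiftTrunc hkm a0 i) abar| := fun h => (soft_ne h0).2 h h2
      rw [max_eq_right (by linarith)]
      norm_num
    have hnn : 0 ≤ ∑ i, (max (|dotp (shiftTrunc hkm a0 i) a| - lam) 0) ^ 2 :=
      Finset.sum_nonneg fun _ _ => sq_nonneg _
    linarith
  right
  obtain ⟨I, hIdef⟩ : ∃ I : Set (Fin m),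
    I = {i | softvec lam (((rcirc k m a0)ᵀ).mulVec (pad k m abar)) i ≠ 0} := ⟨_, rfl⟩
  have hmem : ∀ i, i ∈ I ↔ lam < |shiftTrunc hkm a0 i ⬝ᵥ abar| := by
    intro i
    rw [hIdef, Set.mem_ofPred_eq, softvec, rcirc_mulVec hkm, soft_ne h0, dotp_eq]
  have hne : I.Nonempty := by
    obtain ⟨i, hi⟩ := Function.ne_iff.1 hI
    exact ⟨i, by rw [hIdef]; exact hi⟩
  have hop := hW I ⟨abar, habar, hIdef⟩ hne
  have ha := (l2norm_one abar).1 habar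
  have hsq : ∀ i, l2sq (shiftTrunc hkm a0 i) ≤ 1 := by
    intro i
    refine (l2sq_trunc_le hkm a0 i).trans ?_
    rw [l2sq_eq, (l2norm_one a0).1 ha0]
  have hnpos : ∀ i ∈ I, 0 < l2norm (shiftTrunc hkm a0 i) := by
    intro i hi
    rw [hmem] at hi
    apply Real.sqrt_pos.2
    rcases (l2sq_nonneg (shiftTrunc hkm a0 i)).eq_or_lt with h | h
    · exfalso
      rw [l2sq_eq] at h
      rw [dotProduct_self_eq_zero.1 h.symm] at hi
      simp at hi
      linarith
    · exact h
  haveI : Nonempty I := hne.to_subtype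
  have hcore := core h0 h1 (J := I) (fun j => shiftTrunc hkm a0 (j : Fin m))
    (fun j r => shiftTrunc hkm a0 (j : Fin m) r / l2norm (shiftTrunc hkm a0 (j : Fin m)))
    (fun j => l2norm (shiftTrunc hkm a0 (j : Fin m)))
    (fun j => hnpos j j.2)
    (fun j => Real.sqrt_le_one.2 (hsq j))
    (fun j => by
      funext r
      have := (hnpos j j.2).ne'
      simp only [Pi.smul_apply, smul_eq_mul]
      field_simp)
    (fun j => by
      have := (hnpos j j.2).ne'
      rw [← l2sq_eq]
      simp only [l2sq, div_pow]
      rw [← Finset.sum_div, l2norm_sq, l2sq, div_self]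
      have h5 := l2norm_sq (shiftTrunc hkm a0 (j : Fin m))
      rw [l2sq] at h5
      rw [← h5]
      positivity)
    abar ha (fun j => if 0 < shiftTrunc hkm a0 (j : Fin m) ⬝ᵥ abar then 1 else -1)
    (fun j => by
      by_cases h : 0 < shiftTrunc hkm a0 (j : Fin m) ⬝ᵥ abar <;> simp [h])
    (fun j => by
      have := (hmem j).1 j.2
      by_cases h : 0 < shiftTrunc hkm a0 (j : Fin m) ⬝ᵥ abar
      · rw [abs_of_pos h] at this
        simp [h, this]
      · rw [abs_of_nonpos (not_lt.1 h)] at this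
        simp [h, this])
    (by
      obtain ⟨ε, hε, hl⟩ := hlocmin
      refine ⟨ε, hε, fun a' ha' hd => ?_⟩
      have h2 := hl a' ha' hd
      rw [phiHat_eq hkm h0, phiHat_eq hkm h0] at h2
      simp only [dotp_eq] at h2
      have h3 : ∑ j : I, (max (|shiftTrunc hkm a0 (j : Fin m) ⬝ᵥ a'| - lam) 0) ^ 2 ≤
          ∑ i, (max (|shiftTrunc hkm a0 i ⬝ᵥ a'| - lam) 0) ^ 2 := by
        rw [Finset.sum_set_coe I (f := fun i => (max (|shiftTrunc hkm a0 i ⬝ᵥ a'| - lam) 0) ^ 2)]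
        exact Finset.sum_le_sum_of_subset_of_nonneg (Finset.subset_univ _)
          (fun _ _ _ => sq_nonneg _)
      have h4 : ∑ i, (max (|shiftTrunc hkm a0 i ⬝ᵥ abar| - lam) 0) ^ 2 =
          ∑ j : I, (max (|shiftTrunc hkm a0 (j : Fin m) ⬝ᵥ abar| - lam) 0) ^ 2 := by
        rw [Finset.sum_set_coe I
          (f := fun i => (max (|shiftTrunc hkm a0 i ⬝ᵥ abar| - lam) 0) ^ 2)]
        symm
        apply Finset.sum_subset (Finset.subset_univ _)
        intro i _ hi
        rw [Set.mem_toFinset, hmem] at hi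
        rw [max_eq_right (by linarith)]
        norm_num
      have h5 : ∑ j : I, (max (|shiftTrunc hkm a0 (j : Fin m) ⬝ᵥ abar| - lam) 0) ^ 2 =
          ∑ j : I, ((if 0 < shiftTrunc hkm a0 (j : Fin m) ⬝ᵥ abar then (1 : ℝ) else -1) *
            (shiftTrunc hkm a0 (j : Fin m) ⬝ᵥ abar) - lam) ^ 2 := by
        refine Finset.sum_congr rfl fun j _ => ?_
        have := (hmem j).1 j.2
        rw [max_eq_left (by linarith)]
        by_cases h : 0 < shiftTrunc hkm a0 (j : Fin m) ⬝ᵥ abar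
        · simp [h, abs_of_pos h]
        · rw [abs_of_nonpos (not_lt.1 h)]
          simp [h]
      rw [← h5, ← h4]
      linarith)
    (fun e => by
      have h2 := opNorm_bound _ hop e
      rw [gram_eq (fun (j : I) r => shiftTrunc hkm a0 (j : Fin m) r /
        l2norm (shiftTrunc hkm a0 (j : Fin m)))] at h2
      exact h2)
  obtain ⟨τ, hτ, haτ⟩ := hcore
  obtain ⟨ε, hε⟩ : ∃ ε : ℝ, ε = if 0 < shiftTrunc hkm a0 (τ : Fin m) ⬝ᵥ abar then 1 else -1 :=
    ⟨_, rfl⟩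
  have hε1 : ε = 1 ∨ ε = -1 := by
    rw [hε]
    by_cases h : 0 < shiftTrunc hkm a0 (τ : Fin m) ⬝ᵥ abar <;> simp [h]
  have hab : abar = (fun r => ε * shiftTrunc hkm a0 τ r / l2norm (shiftTrunc hkm a0 τ)) := by
    funext r
    have h2 := congrFun haτ r
    simp only [← hε, Pi.smul_apply, smul_eq_mul] at h2
    rw [h2]
    ring
  refine ⟨ε, hε1, τ, hab, fun x hx => ?_⟩
  refine inner_lt hkm h0 a0 abar _ x (fun i => ?_) hx
  by_cases hi : i = τ
  · have hn := hnpos τ τ.2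
    have hu : dotp (shiftTrunc hkm a0 τ) abar = ε * l2norm (shiftTrunc hkm a0 τ) := by
      have h5 := l2norm_sq (shiftTrunc hkm a0 (τ : Fin m))
      have h6 : dotp (shiftTrunc hkm a0 τ) abar =
          ε / l2norm (shiftTrunc hkm a0 τ) * l2sq (shiftTrunc hkm a0 τ) := by
        conv_lhs => rw [hab]
        rw [dotp, l2sq, Finset.mul_sum]
        exact Finset.sum_congr rfl fun r _ => by ring
      rw [h6, ← h5]
      field_simp
    have hlt : lam < l2norm (shiftTrunc hkm a0 τ) := by
      have h7 := (hmem τ).1 τ.2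
      rw [← dotp_eq, hu, abs_mul, abs_of_pos hn] at h7
      rcases hε1 with h | h <;> rw [h] at h7 <;> simpa using h7
    rw [hi, if_pos rfl, hu, soft_pos h0 hlt]
    rcases hε1 with h | h <;> rw [h]
    · rw [one_mul, one_mul, soft_pos h0 hlt]
    · rw [soft_neg h0 (by linarith)]
      ring
  · rw [if_neg hi]
    have h7 : i ∉ I := fun h => hi (congrArg Subtype.val (hτ ⟨i, h⟩))
    rw [hmem] at h7
    rw [dotp_eq, soft_zero (not_lt.1 h7)]

end
end

section
/- Let U be a real k×n matrix with UᵀU = Id + Δ where ‖Δ‖_op < 1/2, and let η ∈ ℝ^n with 0 < η_min ≤ η_i ≤ η_max ≤ 1 for all i, where η_min = min_i η_i and η_max = max_i η_i. Then for every v ∈ ℝ^n with ‖v‖₂ = 1, ‖U diag(η) v‖₂² ≥ η_min² − 3 η_max η_min ‖Δ‖_op; equivalently, the smallest singular value of U diag(η) satisfies σ_min(U diag(η))² ≥ η_min² − 3 η_max η_min ‖Δ‖_op. -/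
open scoped BigOperators Matrix

attribute [local instance 10] Classical.propDecidable

noncomputable section

theorem aux_bdd {n : ℕ} (A : Matrix (Fin n) (Fin n) ℝ) (u : Fin n → ℝ) (hu : l2norm u = 1) :
    l2norm (A.mulVec u) ≤ opNorm A := by
  unfold opNorm
  apply le_csSup
  · refine ⟨Real.sqrt (∑ i, ∑ j, A i j ^ 2), ?_⟩
    rintro c ⟨v, hv, rfl⟩
    have hv2 : ∑ j, v j ^ 2 = 1 := by
      unfold l2norm l2sq at hv
      exact Real.sqrt_eq_one.mp hv
    unfold l2norm l2sq
    apply Real.sqrt_le_sqrt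
    apply Finset.sum_le_sum
    intro i _
    have h := Finset.sum_mul_sq_le_sq_mul_sq Finset.univ (fun j => A i j) v
    rw [hv2, mul_one] at h
    exact h
  · exact ⟨u, hu, rfl⟩

theorem aux_quad {n : ℕ} (A : Matrix (Fin n) (Fin n) ℝ) (w : Fin n → ℝ) (hw : 0 < l2sq w) :
    -(opNorm A * l2sq w) ≤ dotp w (A.mulVec w) := by
  have hs : 0 < l2norm w := Real.sqrt_pos.mpr hw
  have hs2 : l2norm w ^ 2 = l2sq w := Real.sq_sqrt hw.le
  have hu2 : l2sq ((l2norm w)⁻¹ • w) = 1 := by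
    have : l2sq ((l2norm w)⁻¹ • w) = (l2norm w)⁻¹ ^ 2 * l2sq w := by
      simp only [l2sq, Pi.smul_apply, smul_eq_mul, mul_pow, Finset.mul_sum]
    rw [this, ← hs2]
    field_simp
  have hu : l2norm ((l2norm w)⁻¹ • w) = 1 := by
    rw [l2norm, hu2, Real.sqrt_one]
  have hb := aux_bdd A _ hu
  have hd : dotp ((l2norm w)⁻¹ • w) (A.mulVec ((l2norm w)⁻¹ • w))
      = (l2norm w)⁻¹ ^ 2 * dotp w (A.mulVec w) := by
    simp only [Matrix.mulVec_smul, dotp, Pi.smul_apply, smul_eq_mul, Finset.mul_sum]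
    exact Finset.sum_congr rfl fun i _ => by ring
  have hcs : dotp ((l2norm w)⁻¹ • w) (A.mulVec ((l2norm w)⁻¹ • w)) ^ 2
      ≤ l2sq (A.mulVec ((l2norm w)⁻¹ • w)) := by
    have h := Finset.sum_mul_sq_le_sq_mul_sq Finset.univ ((l2norm w)⁻¹ • w)
      (A.mulVec ((l2norm w)⁻¹ • w))
    unfold l2sq at hu2
    rw [hu2, one_mul] at h
    exact h
  have habs := (Real.abs_le_sqrt hcs).trans hb
  have h1 := (abs_le.mp habs).1
  rw [hd] at h1
  have h2 := mul_le_mul_of_nonneg_left h1 hw.le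
  have h3 : l2sq w * ((l2norm w)⁻¹ ^ 2 * dotp w (A.mulVec w)) = dotp w (A.mulVec w) := by
    rw [← hs2]; field_simp
  rw [h3] at h2
  linarith

/-- lower bound on the smallest singular value of `U diag(η)` when
`UᵀU = Id + Δ` with `‖Δ‖_op < 1/2`. -/
theorem stmt_10 {k n : ℕ} (U : Matrix (Fin k) (Fin n) ℝ)
    (Δ : Matrix (Fin n) (Fin n) ℝ) (hU : Uᵀ * U = 1 + Δ) (hΔ : opNorm Δ < 1 / 2)
    (η : Fin n → ℝ) (ηmin ηmax : ℝ)
    (hmin_mem : ∃ i, η i = ηmin) (hmin_le : ∀ i, ηmin ≤ η i)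
    (hmax_mem : ∃ i, η i = ηmax) (hmax_le : ∀ i, η i ≤ ηmax)
    (hpos : 0 < ηmin) (hone : ηmax ≤ 1) :
    ∀ v : Fin n → ℝ, l2norm v = 1 →
      ηmin ^ 2 - 3 * ηmax * ηmin * opNorm Δ ≤ l2sq ((U * Matrix.diagonal η).mulVec v) := by
  intro v hv
  have hv2 : l2sq v = 1 := by
    unfold l2norm at hv
    exact Real.sqrt_eq_one.mp hv
  have hδ : 0 ≤ opNorm Δ := (Real.sqrt_nonneg _).trans (aux_bdd Δ v hv)
  set w : Fin n → ℝ := (Matrix.diagonal η).mulVec v with hw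
  have hwl : ηmin ^ 2 ≤ l2sq w := by
    have : ηmin ^ 2 * l2sq v ≤ l2sq w := by
      unfold l2sq
      rw [Finset.mul_sum]
      apply Finset.sum_le_sum
      intro i _
      rw [hw, Matrix.mulVec_diagonal, mul_pow]
      exact mul_le_mul_of_nonneg_right (pow_le_pow_left₀ hpos.le (hmin_le i) 2) (sq_nonneg _)
    rwa [hv2, mul_one] at this
  have hwp : 0 < l2sq w := lt_of_lt_of_le (by positivity) hwl
  have hq := aux_quad Δ w hwp
  have hmm : ηmin ≤ ηmax := by
    obtain ⟨i, hi⟩ := hmin_mem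
    exact hi ▸ hmax_le i
  have key : l2sq ((U * Matrix.diagonal η).mulVec v) = l2sq w + dotp w (Δ.mulVec w) := by
    rw [← Matrix.mulVec_mulVec, ← hw]
    have e1 : l2sq (U.mulVec w) = U.mulVec w ⬝ᵥ U.mulVec w := by
      simp only [l2sq, dotProduct, sq]
    have e2 : l2sq w + dotp w (Δ.mulVec w) = w ⬝ᵥ ((1 + Δ).mulVec w) := by
      rw [Matrix.add_mulVec, Matrix.one_mulVec, dotProduct_add]
      simp only [l2sq, dotp, dotProduct, sq]
    rw [e1, e2, ← hU, ← Matrix.mulVec_mulVec, Matrix.dotProduct_mulVec w,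
      Matrix.vecMul_transpose]
  rw [key]
  have h1 : (1 - opNorm Δ) * ηmin ^ 2 ≤ (1 - opNorm Δ) * l2sq w :=
    mul_le_mul_of_nonneg_left hwl (by linarith)
  have h2 : ηmin * ηmin * opNorm Δ ≤ ηmax * ηmin * opNorm Δ := by gcongr
  have h3 : 0 ≤ ηmax * ηmin * opNorm Δ :=
    mul_nonneg (mul_nonneg (hpos.le.trans hmm) hpos.le) hδ
  nlinarith


end
end

section
/- Let A be an n×n real symmetric positive definite matrix and let Δ be an n×n real symmetric matrix with ‖Δ‖_op ≤ λ_min(A)/2, where λ_min(A) is the smallest eigenvalue of A (so A + Δ is positive definite). Then ‖(A + Δ)^{−1/2} − A^{−1/2}‖_op ≤ 2 ‖A‖_op^{1/2} ‖Δ‖_op / λ_min(A)². -/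
open scoped BigOperators Matrix

attribute [local instance 10] Classical.propDecidable

noncomputable section

theorem aux_eig {n : ℕ} {M : Matrix (Fin n) (Fin n) ℝ} (hM : M.IsHermitian) :
    ∃ (b : Fin n → Fin n → ℝ) (μ : Fin n → ℝ), (∀ i, M *ᵥ b i = μ i • b i) ∧
      (∀ i, b i ⬝ᵥ b i = 1) ∧
      (∀ u v : Fin n → ℝ, ∑ i, (b i ⬝ᵥ u) * (b i ⬝ᵥ v) = u ⬝ᵥ v) := by
  refine ⟨fun i => (hM.eigenvectorBasis i).ofLp, hM.eigenvalues, ?_, ?_, ?_⟩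
  · intro i
    exact hM.mulVec_eigenvectorBasis i
  · intro i
    have h := hM.eigenvectorBasis.orthonormal.1 i
    have h2 : inner ℝ (hM.eigenvectorBasis i) (hM.eigenvectorBasis i) = 1 := by
      rw [real_inner_self_eq_norm_sq, h]; norm_num
    rw [EuclideanSpace.inner_eq_star_dotProduct] at h2
    simpa using h2
  · intro u v
    have h := hM.eigenvectorBasis.sum_inner_mul_inner (WithLp.toLp 2 u) (WithLp.toLp 2 v)
    simp only [EuclideanSpace.inner_eq_star_dotProduct] at h
    simp only [star_trivial] at h
    rw [dotProduct_comm u v, ← h]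
    refine Finset.sum_congr rfl fun i _ => ?_
    rw [dotProduct_comm v]

theorem aux_symm {n : ℕ} {M : Matrix (Fin n) (Fin n) ℝ} (hM : M.IsHermitian) (u v : Fin n → ℝ) :
    u ⬝ᵥ (M *ᵥ v) = (M *ᵥ u) ⬝ᵥ v := by
  have h : Mᵀ = M := by
    rw [← Matrix.conjTranspose_eq_transpose_of_trivial]; exact hM
  rw [Matrix.dotProduct_mulVec, ← Matrix.mulVec_transpose, h]

theorem aux_lower {n : ℕ} {M : Matrix (Fin n) (Fin n) ℝ} (hM : M.IsHermitian) (c : ℝ)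
    (h : ∀ (μ : ℝ) (v : Fin n → ℝ), v ⬝ᵥ v = 1 → M *ᵥ v = μ • v → c ≤ μ) (v : Fin n → ℝ) :
    c * (v ⬝ᵥ v) ≤ v ⬝ᵥ (M *ᵥ v) := by
  obtain ⟨b, μ, h1, h2, h3⟩ := aux_eig hM
  rw [← h3 v v, ← h3 v (M *ᵥ v), Finset.mul_sum]
  refine Finset.sum_le_sum fun i _ => ?_
  rw [aux_symm hM, h1, smul_dotProduct, smul_eq_mul]
  have := mul_le_mul_of_nonneg_right (h (μ i) (b i) (h2 i) (h1 i)) (mul_self_nonneg (b i ⬝ᵥ v))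
  linarith

theorem aux_upper {n : ℕ} {M : Matrix (Fin n) (Fin n) ℝ} (hM : M.IsHermitian) (c : ℝ)
    (h : ∀ (μ : ℝ) (v : Fin n → ℝ), v ⬝ᵥ v = 1 → M *ᵥ v = μ • v → μ ^ 2 ≤ c) (v : Fin n → ℝ) :
    (M *ᵥ v) ⬝ᵥ (M *ᵥ v) ≤ c * (v ⬝ᵥ v) := by
  obtain ⟨b, μ, h1, h2, h3⟩ := aux_eig hM
  rw [← h3 v v, ← h3 (M *ᵥ v) (M *ᵥ v), Finset.mul_sum]
  refine Finset.sum_le_sum fun i _ => ?_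
  rw [aux_symm hM, h1, smul_dotProduct, smul_eq_mul]
  have := mul_le_mul_of_nonneg_right (h (μ i) (b i) (h2 i) (h1 i)) (mul_self_nonneg (b i ⬝ᵥ v))
  nlinarith

theorem aux_l2sq {n : ℕ} (v : Fin n → ℝ) : l2sq v = v ⬝ᵥ v := by
  simp [l2sq, dotProduct, sq]

theorem aux_l2norm {n : ℕ} (v : Fin n → ℝ) : l2norm v = ‖WithLp.toLp 2 v‖ := by
  simp [l2norm, l2sq, EuclideanSpace.norm_eq]

theorem aux_norm_sq {n : ℕ} (v : Fin n → ℝ) : l2norm v ^ 2 = v ⬝ᵥ v := by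
  rw [← aux_l2sq, l2norm, Real.sq_sqrt]
  exact Finset.sum_nonneg fun i _ => sq_nonneg _

theorem aux_nonneg {n : ℕ} (M : Matrix (Fin n) (Fin n) ℝ) : 0 ≤ opNorm M := by
  refine Real.sSup_nonneg ?_
  rintro c ⟨v, _, rfl⟩
  exact Real.sqrt_nonneg _

theorem aux_bdd_s12 {n : ℕ} (M : Matrix (Fin n) (Fin n) ℝ) :
    BddAbove {c | ∃ v : Fin n → ℝ, l2norm v = 1 ∧ c = l2norm (M.mulVec v)} := by
  refine ⟨‖Matrix.toEuclideanCLM (𝕜 := ℝ) M‖, ?_⟩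
  rintro c ⟨v, hv, rfl⟩
  have := (Matrix.toEuclideanCLM (𝕜 := ℝ) M).le_opNorm (WithLp.toLp 2 v)
  rw [← aux_l2norm v, hv, mul_one] at this
  rw [aux_l2norm]
  simpa using this

theorem aux_le {n : ℕ} (M : Matrix (Fin n) (Fin n) ℝ) (v : Fin n → ℝ) (hv : v ⬝ᵥ v = 1) :
    (M *ᵥ v) ⬝ᵥ (M *ᵥ v) ≤ opNorm M ^ 2 := by
  rw [← aux_norm_sq]
  have h0 : 0 ≤ l2norm (M *ᵥ v) := Real.sqrt_nonneg _
  refine pow_le_pow_left₀ h0 (le_csSup (aux_bdd_s12 M) ⟨v, ?_, rfl⟩) 2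
  rw [l2norm, aux_l2sq, hv, Real.sqrt_one]

theorem aux_abs {n : ℕ} (M : Matrix (Fin n) (Fin n) ℝ) (v : Fin n → ℝ) (hv : v ⬝ᵥ v = 1) :
    |v ⬝ᵥ (M *ᵥ v)| ≤ opNorm M := by
  refine abs_le_of_sq_le_sq ?_ (aux_nonneg M)
  have h := aux_le M v hv
  have h2 : (v ⬝ᵥ (M *ᵥ v)) ^ 2 ≤ (v ⬝ᵥ v) * ((M *ᵥ v) ⬝ᵥ (M *ᵥ v)) := by
    have := Finset.sum_mul_sq_le_sq_mul_sq Finset.univ v (M *ᵥ v)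
    simpa [dotProduct, sq] using this
  rw [hv, one_mul] at h2
  linarith

theorem aux_lam {n : ℕ} (M : Matrix (Fin n) (Fin n) ℝ) (v : Fin n → ℝ) (hv : v ⬝ᵥ v = 1) :
    lamMin M ≤ v ⬝ᵥ (M *ᵥ v) := by
  refine csInf_le ⟨-opNorm M, ?_⟩ ⟨v, by rw [aux_l2sq, hv], rfl⟩
  rintro c ⟨w, hw, rfl⟩
  rw [aux_l2sq] at hw
  exact neg_le_of_abs_le (aux_abs M w hw)

theorem aux_pos {n : ℕ} {M : Matrix (Fin n) (Fin n) ℝ} (hM : M.PosDef) (v : Fin n → ℝ)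
    (hv : v ≠ 0) : 0 < v ⬝ᵥ (M *ᵥ v) := by
  simpa using hM.dotProduct_mulVec_pos hv

theorem aux_lam_pos {n : ℕ} (hn : 0 < n) {M : Matrix (Fin n) (Fin n) ℝ} (hM : M.PosDef) :
    0 < lamMin M := by
  have : Nonempty (Fin n) := ⟨⟨0, hn⟩⟩
  obtain ⟨b, μ, h1, h2, h3⟩ := aux_eig hM.1
  obtain ⟨i, hi⟩ := Finite.exists_min μ
  have hb : ∀ j, b j ≠ 0 := fun j hj => by
    have := h2 j
    simp [hj] at this
  have hμ : 0 < μ i := by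
    have := aux_pos hM (b i) (hb i)
    rwa [h1, dotProduct_smul, h2, smul_eq_mul, mul_one] at this
  refine lt_of_lt_of_le hμ (le_csInf ⟨_, b i, by rw [aux_l2sq, h2], rfl⟩ ?_)
  rintro c ⟨v, hv, rfl⟩
  rw [aux_l2sq] at hv
  change _ ≤ v ⬝ᵥ (M *ᵥ v)
  rw [← h3 v (M *ᵥ v)]
  rw [← mul_one (μ i), ← hv, ← h3 v v, Finset.mul_sum]
  refine Finset.sum_le_sum fun j _ => ?_
  rw [aux_symm hM.1 (b j), h1, smul_dotProduct, smul_eq_mul]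
  have := mul_le_mul_of_nonneg_right (hi j) (mul_self_nonneg (b j ⬝ᵥ v))
  linarith

theorem aux_opNorm_le {n : ℕ} (M : Matrix (Fin n) (Fin n) ℝ) (c : ℝ) (hc : 0 ≤ c)
    (h : ∀ v : Fin n → ℝ, v ⬝ᵥ v = 1 → (M *ᵥ v) ⬝ᵥ (M *ᵥ v) ≤ c ^ 2) : opNorm M ≤ c := by
  refine Real.sSup_le ?_ hc
  rintro d ⟨v, hv, rfl⟩
  have hv' : v ⬝ᵥ v = 1 := by rw [← aux_norm_sq, hv]; norm_num
  have := h v hv'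
  rw [← aux_norm_sq] at this
  exact le_of_sq_le_sq this hc

theorem aux_unit {n : ℕ} (P : Matrix (Fin n) (Fin n) ℝ) (hP : P.IsHermitian) (c : ℝ)
    (h : ∀ v : Fin n → ℝ, v ⬝ᵥ v = 1 → c ≤ v ⬝ᵥ (P *ᵥ v)) (v : Fin n → ℝ) :
    c * (v ⬝ᵥ v) ≤ v ⬝ᵥ (P *ᵥ v) := by
  refine aux_lower hP c ?_ v
  intro μ w hw hμ
  have := h w hw
  rwa [hμ, dotProduct_smul, hw, smul_eq_mul, mul_one] at this

theorem aux_main {n : ℕ} (hn : 0 < n) (A Δ : Matrix (Fin n) (Fin n) ℝ)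
    (hA : A.PosDef) (hΔ : Δ.IsSymm) (hbound : opNorm Δ ≤ lamMin A / 2) :
    (A + Δ).PosDef ∧
    ∀ S T : Matrix (Fin n) (Fin n) ℝ,
      S.PosDef → S * S = A → T.PosDef → T * T = A + Δ →
      opNorm (T⁻¹ - S⁻¹) ≤ 2 * Real.sqrt (opNorm A) * opNorm Δ / (lamMin A) ^ 2 := by
  have hl := aux_lam_pos hn hA
  have hlA := aux_lam A
  have hDabs := aux_abs Δ
  have hD0 := aux_nonneg Δ
  have hA0 := aux_nonneg A
  have hLl : lamMin A ≤ opNorm A := by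
    obtain ⟨b, μ, h1, h2, h3⟩ := aux_eig hA.1
    exact (hlA (b ⟨0, hn⟩) (h2 _)).trans ((le_abs_self _).trans (aux_abs A _ (h2 _)))
  set l := lamMin A with hldef
  set δ := opNorm Δ with hδdef
  set L := opNorm A with hLdef
  have hΔH : Δ.IsHermitian := by
    rw [Matrix.IsHermitian, Matrix.conjTranspose_eq_transpose_of_trivial]; exact hΔ
  have hADH : (A + Δ).IsHermitian := hA.1.add hΔH
  have hAq := aux_unit A hA.1 l hlA
  have hADq := aux_unit (A + Δ) hADH (l / 2) (by
    intro v hv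
    rw [Matrix.add_mulVec, dotProduct_add]
    have h1 := hlA v hv
    have h2 := neg_le_of_abs_le (hDabs v hv)
    linarith)
  refine ⟨?_, ?_⟩
  · rw [Matrix.posDef_iff_dotProduct_mulVec]
    refine ⟨hADH, fun v hv => ?_⟩
    rw [star_trivial]
    have h1 : 0 < v ⬝ᵥ v := by
      have := Matrix.dotProduct_star_self_pos_iff.2 hv
      simpa using this
    exact lt_of_lt_of_le (mul_pos (half_pos hl) h1) (hADq v)
  intro S T hS hSA hT hTA
  -- S ≥ √l
  have hSq : ∀ v : Fin n → ℝ, v ⬝ᵥ v = 1 → Real.sqrt l ≤ v ⬝ᵥ (S *ᵥ v) := by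
    intro v hv
    have h := aux_lower hS.1 (Real.sqrt l) (by
      intro μ w hw hμ
      have hw0 : w ≠ 0 := by
        rintro rfl
        simp at hw
      have hμ0 : 0 < μ := by
        have := aux_pos hS w hw0
        rwa [hμ, dotProduct_smul, hw, smul_eq_mul, mul_one] at this
      have h1 := hlA w hw
      rw [← hSA, ← Matrix.mulVec_mulVec, aux_symm hS.1, hμ, smul_dotProduct, dotProduct_smul, hw,
        smul_eq_mul, smul_eq_mul, mul_one] at h1
      rw [Real.sqrt_le_left hμ0.le]
      nlinarith) v
    rwa [hv, mul_one] at h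
  have hX : ∀ v : Fin n → ℝ, ((S - T) *ᵥ v) ⬝ᵥ ((S - T) *ᵥ v) ≤ (δ ^ 2 / l) * (v ⬝ᵥ v) := by
    refine aux_upper (hS.1.sub hT.1) _ ?_
    intro μ w hw hμ
    have hw0 : w ≠ 0 := by
      rintro rfl
      simp at hw
    have e : (S - T) * T + S * (S - T) = -Δ := by
      have : Δ = T * T - S * S := by rw [hTA, hSA]; abel
      rw [this]; noncomm_ring
    have e2 : w ⬝ᵥ (((S - T) * T + S * (S - T)) *ᵥ w) = -(w ⬝ᵥ (Δ *ᵥ w)) := by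
      rw [e, Matrix.neg_mulVec, dotProduct_neg]
    rw [Matrix.add_mulVec, dotProduct_add, ← Matrix.mulVec_mulVec, ← Matrix.mulVec_mulVec,
      aux_symm (hS.1.sub hT.1), hμ, smul_dotProduct, Matrix.mulVec_smul, dotProduct_smul,
      smul_eq_mul, smul_eq_mul] at e2
    have hs := hSq w hw
    have ht := aux_pos hT w hw0
    have hd := hDabs w hw
    have hl0 := Real.sqrt_pos.2 hl
    have h1 : |μ| * Real.sqrt l ≤ δ := by
      calc |μ| * Real.sqrt l ≤ |μ| * (w ⬝ᵥ (T *ᵥ w) + w ⬝ᵥ (S *ᵥ w)) := by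
            gcongr; linarith
        _ = |μ * (w ⬝ᵥ (T *ᵥ w) + w ⬝ᵥ (S *ᵥ w))| := by
            rw [abs_mul, abs_of_pos (a := w ⬝ᵥ (T *ᵥ w) + w ⬝ᵥ (S *ᵥ w)) (by linarith)]
        _ = |w ⬝ᵥ (Δ *ᵥ w)| := by rw [mul_add, e2, abs_neg]
        _ ≤ δ := hd
    rw [le_div_iff₀ hl]
    have h2 := pow_le_pow_left₀ (by positivity) h1 2
    rwa [mul_pow, sq_abs, Real.sq_sqrt hl.le] at h2
  have hSu : S * S⁻¹ = 1 := Matrix.mul_nonsing_inv _ ((Matrix.isUnit_iff_isUnit_det _).1 hS.isUnit)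
  have hTu : T⁻¹ * T = 1 := Matrix.nonsing_inv_mul _ ((Matrix.isUnit_iff_isUnit_det _).1 hT.isUnit)
  have hTu' : T * T⁻¹ = 1 := Matrix.mul_nonsing_inv _ ((Matrix.isUnit_iff_isUnit_det _).1 hT.isUnit)
  have hY : T⁻¹ - S⁻¹ = T⁻¹ * ((S - T) * S⁻¹) := by
    rw [sub_mul, mul_sub, hSu, ← mul_assoc, hTu, mul_one, one_mul]
  refine aux_opNorm_le _ _ (by positivity) ?_
  intro u hu
  rw [hY, ← Matrix.mulVec_mulVec, ← Matrix.mulVec_mulVec]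
  set p := S⁻¹ *ᵥ u with hp
  set q := (S - T) *ᵥ p with hq
  set r := T⁻¹ *ᵥ q with hr
  have hpu : S *ᵥ p = u := by rw [hp, Matrix.mulVec_mulVec, hSu, Matrix.one_mulVec]
  have hrq : T *ᵥ r = q := by rw [hr, Matrix.mulVec_mulVec, hTu', Matrix.one_mulVec]
  have b1 := hAq p
  rw [← hSA, ← Matrix.mulVec_mulVec, aux_symm hS.1, hpu, hu] at b1
  have b2 := hX p
  have b3 := hADq r
  rw [← hTA, ← Matrix.mulVec_mulVec, aux_symm hT.1, hrq] at b3
  rw [← hq] at b2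
  have hL : (2 * Real.sqrt L * δ / l ^ 2) ^ 2 = 4 * L * δ ^ 2 / l ^ 4 := by
    rw [div_pow, mul_pow, mul_pow, Real.sq_sqrt hA0]; ring
  rw [hL]
  have c1 : p ⬝ᵥ p ≤ 1 / l := by rw [le_div_iff₀ hl]; linarith
  have c2 : q ⬝ᵥ q ≤ δ ^ 2 / l * (1 / l) :=
    b2.trans (mul_le_mul_of_nonneg_left c1 (by positivity))
  have c3 : r ⬝ᵥ r ≤ 2 * (δ ^ 2 / l * (1 / l)) / l := by
    rw [le_div_iff₀ hl]; linarith
  refine c3.trans ?_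
  have : 2 * (δ ^ 2 / l * (1 / l)) / l = 2 * l * δ ^ 2 / l ^ 4 := by
    field_simp
  rw [this]
  gcongr
  linarith

/-- perturbation bound for inverse square roots of positive definite
matrices (square roots characterized as the unique positive-definite matrices
squaring to `A` resp. `A + Δ`). -/
theorem stmt_12 {n : ℕ} (A Δ : Matrix (Fin n) (Fin n) ℝ)
    (hA : A.PosDef) (hΔ : Δ.IsSymm) (hbound : opNorm Δ ≤ lamMin A / 2) :
    (A + Δ).PosDef ∧
    ∀ S T : Matrix (Fin n) (Fin n) ℝ,
      S.PosDef → S * S = A → T.PosDef → T * T = A + Δ →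
      opNorm (T⁻¹ - S⁻¹) ≤ 2 * Real.sqrt (opNorm A) * opNorm Δ / (lamMin A) ^ 2 := by
  rcases Nat.eq_zero_or_pos n with hn | hn
  · subst hn
    refine ⟨?_, ?_⟩
    · rw [Matrix.posDef_iff_dotProduct_mulVec]
      exact ⟨Subsingleton.elim _ _, fun v hv => absurd (Subsingleton.elim v 0) hv⟩
    · intro S T _ _ _ _
      have h1 := aux_nonneg Δ
      refine aux_opNorm_le _ _ (by positivity) ?_
      intro v hv
      simp at hv
  · exact aux_main hn A Δ hA hΔ hbound

end
end

section
/- Let 0 < λ < 1 and let a0, a ∈ ℝ^k with ‖a0‖₂ = ‖a‖₂ = 1 and ⟨a, a0⟩ ≥ λ. Suppose that for every τ ∈ {1,…,m−1}, |⟨ι a0, s_τ[ι a0]⟩| < λ² − (2 + 1/λ²)√(1 − λ²). Then for every τ ∈ {1,…,m−1}, |⟨ι a, s_τ[ι a]⟩| < 1 − √(1 − λ²)/λ². -/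
open scoped BigOperators Matrix

attribute [local instance 10] Classical.propDecidable

noncomputable section

theorem aux_cs {m : ℕ} (u v : Fin m → ℝ) (p q : ℝ) (hp : 0 ≤ p) (hq : 0 ≤ q)
    (hu : dotp u u = p ^ 2) (hv : dotp v v = q ^ 2) : |dotp u v| ≤ p * q := by
  apply abs_le_of_sq_le_sq _ (by positivity)
  have h := Finset.sum_mul_sq_le_sq_mul_sq Finset.univ u v
  have e1 : ∑ i, u i ^ 2 = p ^ 2 := by rw [← hu]; simp [dotp, sq]
  have e2 : ∑ i, v i ^ 2 = q ^ 2 := by rw [← hv]; simp [dotp, sq]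
  rw [e1, e2] at h
  rw [mul_pow]
  exact h

theorem aux_pad {k m : ℕ} (hkm : k ≤ m) (a b : Fin k → ℝ) :
    dotp (pad k m a) (pad k m b) = dotp a b := by
  obtain ⟨n, rfl⟩ := Nat.exists_eq_add_of_le hkm
  simp [dotp, pad, Fin.sum_univ_add]

theorem aux_shift {m : ℕ} [NeZero m] (τ : ℤ) (u v : Fin m → ℝ) :
    dotp (cshift τ u) (cshift τ v) = dotp u v := by
  have hinj : Function.Injective (fun i : Fin m => idx m ((i : ℤ) - τ)) := by
    intro i j hij
    have hm : (0 : ℤ) < (m : ℤ) := by exact_mod_cast Nat.pos_of_ne_zero (NeZero.ne m)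
    have h := congrArg Fin.val hij
    simp only [idx] at h
    have a1 := Int.emod_nonneg ((i : ℤ) - τ) (ne_of_gt hm)
    have a2 := Int.emod_nonneg ((j : ℤ) - τ) (ne_of_gt hm)
    have h2 : ((i : ℤ) - τ) % m = ((j : ℤ) - τ) % m := by omega
    have h3 : (i : ℤ) ≡ j [ZMOD m] := by
      have h4 : (i : ℤ) - τ ≡ (j : ℤ) - τ [ZMOD m] := h2
      simpa using h4.add_right τ
    have h5 : (i : ℤ) % m = (j : ℤ) % m := h3
    rw [Int.emod_eq_of_lt (by omega) (by have := i.2; omega),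
      Int.emod_eq_of_lt (by omega) (by have := j.2; omega)] at h5
    apply Fin.ext
    omega
  have hbij := Finite.injective_iff_bijective.mp hinj
  exact Function.Bijective.sum_comp hbij (fun i => u i * v i)

theorem aux_lin {m : ℕ} [NeZero m] (τ : ℤ) (c : ℝ) (u r : Fin m → ℝ) :
    dotp (fun i => c * u i + r i) (cshift τ (fun i => c * u i + r i)) =
      c ^ 2 * dotp u (cshift τ u) + c * dotp u (cshift τ r) + c * dotp r (cshift τ u)
        + dotp r (cshift τ r) := by
  simp only [dotp, cshift, Finset.mul_sum, ← Finset.sum_add_distrib]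
  exact Finset.sum_congr rfl fun i _ => by ring

theorem aux_norm {k : ℕ} (a : Fin k → ℝ) (h : l2norm a = 1) : dotp a a = 1 := by
  have h2 : l2sq a = 1 := by simpa [l2norm] using h
  rw [← h2]; simp [dotp, l2sq, sq]

/-- if the shifts of `ι a0` are nearly orthogonal and `⟨a, a0⟩ ≥ λ`,
then the nonzero shift correlations of `ι a` are bounded by `1 − √(1−λ²)/λ²`. -/
theorem stmt_15 {k m : ℕ} [NeZero m] (hkm : k ≤ m) (lam : ℝ) (h0 : 0 < lam)
    (h1 : lam < 1) (a0 a : Fin k → ℝ) (ha0 : l2norm a0 = 1) (ha : l2norm a = 1)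
    (hcorr : lam ≤ dotp a a0)
    (hsep : ∀ τ : Fin m, τ ≠ 0 →
      |dotp (pad k m a0) (cshift (τ : ℤ) (pad k m a0))|
        < lam ^ 2 - (2 + 1 / lam ^ 2) * Real.sqrt (1 - lam ^ 2)) :
    ∀ τ : Fin m, τ ≠ 0 →
      |dotp (pad k m a) (cshift (τ : ℤ) (pad k m a))|
        < 1 - Real.sqrt (1 - lam ^ 2) / lam ^ 2 := by
  intro τ hτ
  have hs := hsep τ hτ
  have hu := aux_norm a0 ha0
  have hv := aux_norm a ha
  rw [← aux_pad hkm] at hu hv hcorr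
  generalize pad k m a0 = u at *
  generalize pad k m a = v at *
  set c := dotp v u with hc
  set r : Fin m → ℝ := fun i => v i - c * u i with hr
  have hrr : dotp r r = 1 - c ^ 2 := by
    have : dotp r r = dotp v v - 2 * c * dotp v u + c ^ 2 * dotp u u := by
      simp only [dotp, hr, Finset.mul_sum, ← Finset.sum_add_distrib, ← Finset.sum_sub_distrib]
      exact Finset.sum_congr rfl fun i _ => by ring
    rw [this, hu, hv, ← hc]; ring
  have hnn : 0 ≤ 1 - c ^ 2 := by
    rw [← hrr]; exact Finset.sum_nonneg fun i _ => mul_self_nonneg _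
  have hvr : v = fun i => c * u i + r i := by
    funext i; simp [hr]
  have hlin := aux_lin (τ : ℤ) c u r
  rw [← hvr] at hlin
  obtain ⟨s, hs0, hsq⟩ : ∃ s : ℝ, 0 ≤ s ∧ s ^ 2 = 1 - c ^ 2 :=
    ⟨_, Real.sqrt_nonneg _, Real.sq_sqrt hnn⟩
  have hσ0 := Real.sqrt_nonneg (1 - lam ^ 2)
  have hσ2 : Real.sqrt (1 - lam ^ 2) ^ 2 = 1 - lam ^ 2 := Real.sq_sqrt (by nlinarith)
  rw [← hsq] at hrr
  have hu' : dotp u u = 1 ^ 2 := by rw [hu]; norm_num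
  have b1 := aux_cs u (cshift τ r) 1 s zero_le_one hs0 hu' (by rw [aux_shift, hrr])
  have b2 := aux_cs r (cshift τ u) s 1 hs0 zero_le_one hrr (by rw [aux_shift, hu'])
  have b3 := aux_cs r (cshift τ r) s s hs0 hs0 hrr (by rw [aux_shift, hrr])
  have e : (2 + 1 / lam ^ 2) * Real.sqrt (1 - lam ^ 2)
      = 2 * Real.sqrt (1 - lam ^ 2) + Real.sqrt (1 - lam ^ 2) / lam ^ 2 := by ring
  rw [e] at hs
  rw [hlin]
  clear hlin
  generalize Real.sqrt (1 - lam ^ 2) = σ at *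
  generalize σ / lam ^ 2 = w at *
  have hc0 : 0 ≤ c := by linarith
  have hsσ : s ≤ σ := abs_le_of_sq_le_sq' (by nlinarith) hσ0 |>.2
  have hc1 : c ≤ 1 := by nlinarith
  generalize dotp u (cshift τ u) = A at *
  generalize dotp u (cshift τ r) = B at *
  generalize dotp r (cshift τ u) = C at *
  generalize dotp r (cshift τ r) = D at *
  have t : |c ^ 2 * A + c * B + c * C + D| ≤ c ^ 2 * |A| + c * |B| + c * |C| + |D| := by
    refine (abs_add_le _ _).trans (add_le_add ((abs_add_le _ _).trans (add_le_add
      ((abs_add_le _ _).trans (add_le_add ?_ ?_)) ?_)) le_rfl)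
    · rw [abs_mul, abs_of_nonneg (sq_nonneg c)]
    · rw [abs_mul, abs_of_nonneg hc0]
    · rw [abs_mul, abs_of_nonneg hc0]
  have t1 : c ^ 2 * |A| ≤ |A| := mul_le_of_le_one_left (abs_nonneg _) (by linarith)
  have t2 : c * |B| ≤ |B| := mul_le_of_le_one_left (abs_nonneg _) hc1
  have t3 : c * |C| ≤ |C| := mul_le_of_le_one_left (abs_nonneg _) hc1
  have t4 : s * s ≤ σ ^ 2 := by nlinarith
  linarith

end
end

section
/- Let x0, x* ∈ ℝ^m with supp(x*) ⊆ supp(x0), and suppose the support of x0 is 2k-separated, i.e. for every pair of distinct indices i ≠ j in supp(x0) the cyclic distance min((i − j) mod m, (j − i) mod m) is at least 2k. Then for all a, a0 ∈ ℝ^k: ι* (C_{x*})ᵀ ( (ι a) ⊛ x* − (ι a0) ⊛ x0 ) = ‖x*‖₂² a − ⟨x*, x0⟩ a0. Consequently, if ‖a‖₂ = 1, then (Id − a aᵀ) ι* (C_{x*})ᵀ ( (ι a) ⊛ x* − (ι a0) ⊛ x0 ) = −⟨x*, x0⟩ (Id − a aᵀ) a0. -/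
open scoped BigOperators Matrix

attribute [local instance 10] Classical.propDecidable

noncomputable section

theorem idx_sub {m : ℕ} [NeZero m] (i j : Fin m) : idx m ((i : ℤ) - (j : ℤ)) = i - j := by
  apply Fin.ext
  have hi := i.isLt
  have hj := j.isLt
  simp only [idx, Fin.sub_def]
  have h : ((i : ℤ) - (j : ℤ)) % (m : ℤ) = (((m - (j : ℕ) + (i : ℕ)) % m : ℕ) : ℤ) := by
    push_cast [Nat.cast_sub hj.le]
    rw [show (m : ℤ) - (j : ℤ) + (i : ℤ) = ((i : ℤ) - (j : ℤ)) + m by ring]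
    simp
  rw [h]
  exact Int.toNat_natCast _

theorem pad_far {k m : ℕ} [NeZero m] (a : Fin k → ℝ) (J p l : Fin m)
    (hJ : (J : ℕ) < k) (hne : p ≠ l)
    (h : 2 * k ≤ min ((p - l : Fin m) : ℕ) ((l - p : Fin m) : ℕ)) :
    pad k m a (p + J - l) = 0 := by
  have hlt : ¬ ((p + J - l : Fin m) : ℕ) < k := by
    have e : p + J - l = (p - l) + J := by abel
    rw [e, Fin.val_add]
    have h1 : 2 * k ≤ ((p - l : Fin m) : ℕ) := le_trans h (min_le_left _ _)
    have h2 : 2 * k ≤ ((l - p : Fin m) : ℕ) := le_trans h (min_le_right _ _)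
    have e2 : ((p - l : Fin m) : ℕ) + ((l - p : Fin m) : ℕ) = m := by
      have hp := p.isLt
      have hl := l.isLt
      have hv : (p : ℕ) ≠ (l : ℕ) := fun h => hne (Fin.ext h)
      rcases lt_or_gt_of_ne hv with h | h
      · have b : ((l - p : Fin m) : ℕ) = l - p := Fin.sub_val_of_le (le_of_lt h)
        have c : ((p - l : Fin m) : ℕ) = m - l + p := by
          rw [Fin.sub_def]; exact Nat.mod_eq_of_lt (by omega)
        omega
      · have b : ((p - l : Fin m) : ℕ) = p - l := Fin.sub_val_of_le (le_of_lt h)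
        have c : ((l - p : Fin m) : ℕ) = m - p + l := by
          rw [Fin.sub_def]; exact Nat.mod_eq_of_lt (by omega)
        omega
    rw [Nat.mod_eq_of_lt (by omega)]
    omega
  simp only [pad, dif_neg hlt]

theorem key {k m : ℕ} [NeZero m] (hkm : k ≤ m) (x0 xs x : Fin m → ℝ)
    (hs : ∀ i, xs i ≠ 0 → x0 i ≠ 0) (hx : ∀ i, x i ≠ 0 → x0 i ≠ 0)
    (hsep : ∀ i j : Fin m, x0 i ≠ 0 → x0 j ≠ 0 → i ≠ j →
      2 * k ≤ min ((i - j : Fin m) : ℕ) ((j - i : Fin m) : ℕ)) (a : Fin k → ℝ) :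
    unpad hkm (((circ xs)ᵀ).mulVec (conv (pad k m a) x)) = dotp xs x • a := by
  funext j
  simp only [unpad, conv, Matrix.mulVec, dotProduct, Matrix.transpose_apply, circ, Matrix.of_apply,
    cshift, idx_sub, Pi.smul_apply, smul_eq_mul, dotp]
  set J : Fin m := Fin.castLE hkm j with hJ
  have hJk : (J : ℕ) < k := j.isLt
  rw [← Equiv.sum_comp (Equiv.addRight J), Finset.sum_mul]
  refine Finset.sum_congr rfl fun p _ => ?_
  simp only [Equiv.coe_addRight, add_sub_cancel_right]
  by_cases hp : xs p = 0
  · simp [hp]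
  rw [Finset.sum_eq_single p]
  · have : pad k m a (p + J - p) = a j := by
      rw [add_sub_cancel_left]
      simp only [pad, dif_pos hJk]
      rfl
    rw [this]; ring
  · intro l _ hl
    by_cases hxl : x l = 0
    · simp [hxl]
    rw [pad_far a J p l hJk hl.symm (hsep p l (hs p hp) (hx l hxl) hl.symm), zero_mul]
  · simp

/-- for `2k`-separated supports with `supp(x*) ⊆ supp(x0)`,
`ι* C_{x*}ᵀ ((ι a) ⊛ x* − (ι a0) ⊛ x0) = ‖x*‖₂² a − ⟨x*, x0⟩ a0`, and consequently the
projected gradient is `−⟨x*, x0⟩ (Id − a aᵀ) a0` for unit `a`. -/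
theorem stmt_16 {k m : ℕ} [NeZero m] (hkm : k ≤ m) (x0 xstar : Fin m → ℝ)
    (hsupp : {i | xstar i ≠ 0} ⊆ {i | x0 i ≠ 0})
    (hsep : ∀ i j : Fin m, x0 i ≠ 0 → x0 j ≠ 0 → i ≠ j →
      2 * k ≤ min ((i - j : Fin m) : ℕ) ((j - i : Fin m) : ℕ)) :
    (∀ a a0 : Fin k → ℝ,
      unpad hkm (((circ xstar)ᵀ).mulVec (conv (pad k m a) xstar - conv (pad k m a0) x0))
        = l2sq xstar • a - dotp xstar x0 • a0) ∧
    (∀ a a0 : Fin k → ℝ, l2norm a = 1 →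
      (1 - Matrix.vecMulVec a a).mulVec
          (unpad hkm (((circ xstar)ᵀ).mulVec (conv (pad k m a) xstar - conv (pad k m a0) x0)))
        = (-dotp xstar x0) • ((1 - Matrix.vecMulVec a a).mulVec a0)) := by
  have main : ∀ a a0 : Fin k → ℝ,
      unpad hkm (((circ xstar)ᵀ).mulVec (conv (pad k m a) xstar - conv (pad k m a0) x0))
        = l2sq xstar • a - dotp xstar x0 • a0 := by
    intro a a0
    have hs : ∀ i, xstar i ≠ 0 → x0 i ≠ 0 := fun i hi => hsupp hi
    have h1 := key hkm x0 xstar xstar hs hs hsep a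
    have h2 := key hkm x0 xstar x0 hs (fun i hi => hi) hsep a0
    have h3 : l2sq xstar = dotp xstar xstar := by simp [l2sq, dotp, sq]
    rw [h3, ← h1, ← h2, Matrix.mulVec_sub]
    rfl
  refine ⟨main, fun a a0 ha => ?_⟩
  have haa : a ⬝ᵥ a = 1 := by
    have h : l2sq a = 1 := by simpa [l2norm] using ha
    simpa [l2sq, dotProduct, sq] using h
  have h0 : (1 - Matrix.vecMulVec a a).mulVec a = 0 := by
    rw [Matrix.sub_mulVec, Matrix.one_mulVec, Matrix.vecMulVec_mulVec, haa]
    simp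
  rw [main, Matrix.mulVec_sub, Matrix.mulVec_smul, Matrix.mulVec_smul, h0]
  simp

end
end
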